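/- The uncentered Hardy–Littlewood maximal operator M̃ : BV(ℝ) → BV(ℝ) is continuous: if f, f_j ∈ BV(ℝ) with ‖f_j − f‖_{BV} → 0, then ‖M̃f_j − M̃f‖_{BV} → 0, where ‖h‖_{BV} = |h(−∞)| + Var(h). -/

import Mathlib

open MeasureTheory Filter Set Topology

/-- Average of |f| over the interval (a,b). -/
noncomputable def mAvg (f : ℝ → ℝ) (a b : ℝ) : ℝ := (∫ t in a..b, |f t|) / (b - a)

/-- Uncentered Hardy–Littlewood maximal function. -/
noncomputable def uMax (f : ℝ → ℝ) (x : ℝ) : ℝ :=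
  sSup {y | ∃ a b : ℝ, a < b ∧ a ≤ x ∧ x ≤ b ∧ y = mAvg f a b}

/-- f has bounded variation on ℝ. -/
def BVfun (f : ℝ → ℝ) : Prop := BoundedVariationOn f Set.univ

/-- Total variation of f over a set, as a real number. -/
noncomputable def varOn (f : ℝ → ℝ) (s : Set ℝ) : ℝ := (eVariationOn f s).toReal

/-- BV norm: |f(-∞)| + Var(f). -/
noncomputable def bvNorm (f : ℝ → ℝ) : ℝ :=
  |limUnder Filter.atBot f| + varOn f Set.univ

/-- Upper precise representative: limsup over intervals I ∋ x with |I| → 0 of averages of |f|. -/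
noncomputable def ubar (f : ℝ → ℝ) (x : ℝ) : ℝ :=
  ⨅ h : {h : ℝ // 0 < h},
    sSup {y | ∃ a b : ℝ, a < b ∧ a ≤ x ∧ x ≤ b ∧ b - a ≤ h.1 ∧ y = mAvg f a b}

/-- The open "interval" (a,b) in ℝ with extended-real endpoints. -/
noncomputable def erealIoo (a b : EReal) : Set ℝ := {x : ℝ | a < (x : EReal) ∧ (x : EReal) < b}

/-- Value of g at an extended-real point, understood as a limit at ±∞. -/
noncomputable def valAt (g : ℝ → ℝ) (a : EReal) : ℝ :=
  if a = ⊥ then limUnder Filter.atBot g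
  else if a = ⊤ then limUnder Filter.atTop g
  else g a.toReal

/-!
Replacing every function by its right limits changes neither the maximal functions nor the
hypotheses, so one may assume `|f| ≤ Mf` everywhere. Then `Mf_j → Mf` uniformly, and the question is
how much variation `Mf_j - Mf` keeps.

* Call `x` a contact point of `f` if `|f|` comes arbitrarily close to `Mf x` near `x`. Away from the
  contact points only intervals of length bounded below matter for `Mf` and `Mf_j`, so the slopes of
  these functions decrease by no more than a fixed monotone function grows. For such almost convex
  functions uniform convergence implies convergence in variation.
* On an interval that meets the contact set, the variation of `Mf_j - Mf` is asymptotically at most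
  `8` times the variation of `f` on any larger interval.
* Write `f = φ ∘ V` with `V` the cumulative variation of `f`. Then `|φ'| = 1` almost everywhere on
  the range of `V`. If `x` is a contact point at which `V` is continuous and `φ' (V x) ≠ 0`, then
  `|f|` grows with `V` on one side of `x`; as `Mf x ≤ |f x|`, this forces `V` to be constant on that
  side. Hence the contact points at which `V` is continuous have a null image under `V`, and `f` has
  arbitrarily little variation on suitable intervals covering them.
* What remains are the countably many jumps of `V` and a neighbourhood of infinity. Near each of
  them `Mf` and `Mf_j` take values in a narrow band and `f` has little variation on either side of
  the jump, which makes the variation of `Mf_j - Mf` small.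
-/

open scoped ENNReal

section Variation

variable {α : Type*} [LinearOrder α] {E F G : Type*}

section PseudoMetric

variable [PseudoMetricSpace E] [PseudoMetricSpace F] [PseudoMetricSpace G]

theorem eVariationOn_le_add_of_dist_le {u : α → E} {v : α → F} {w : α → G} {s : Set α}
    (h : ∀ x ∈ s, ∀ y ∈ s, dist (u x) (u y) ≤ dist (v x) (v y) + dist (w x) (w y)) :
    eVariationOn u s ≤ eVariationOn v s + eVariationOn w s := by
  have h_edist : ∀ x ∈ s, ∀ y ∈ s,
      edist (u x) (u y) ≤ edist (v x) (v y) + edist (w x) (w y) := fun x hx y hy => by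
    simpa only [edist_dist, ← ENNReal.ofReal_add dist_nonneg dist_nonneg]
      using ENNReal.ofReal_le_ofReal (h x hx y hy)
  refine iSup_le fun p => ?_
  calc _ ≤ ∑ i ∈ Finset.range p.1, (edist (v (p.2.1 (i + 1))) (v (p.2.1 i))
            + edist (w (p.2.1 (i + 1))) (w (p.2.1 i))) :=
        Finset.sum_le_sum fun i _ => h_edist _ (p.2.2.2 _) _ (p.2.2.2 _)
    _ ≤ _ := by
        rw [Finset.sum_add_distrib]
        exact add_le_add (eVariationOn.sum_le p.2.2.1 p.2.2.2)
          (eVariationOn.sum_le p.2.2.1 p.2.2.2)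

theorem eVariationOn_le_of_dist_le {u : α → E} {v : α → F} {s : Set α}
    (h : ∀ x ∈ s, ∀ y ∈ s, dist (u x) (u y) ≤ dist (v x) (v y)) :
    eVariationOn u s ≤ eVariationOn v s := by
  have h_const : eVariationOn (fun _ : α => (0 : ℝ)) s = 0 :=
    eVariationOn.constant_on (by simp [Set.Subsingleton])
  have h_add := eVariationOn_le_add_of_dist_le (w := fun _ : α => (0 : ℝ)) (v := v)
    (by simpa only [dist_self, add_zero] using h)
  rwa [h_const, add_zero] at h_add

theorem dist_le_of_eVariationOn_le {u : α → E} {s : Set α} {ε : ℝ} (hε : 0 ≤ ε)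
    (h : eVariationOn u s ≤ ENNReal.ofReal ε) {x y : α} (hx : x ∈ s) (hy : y ∈ s) :
    dist (u x) (u y) ≤ ε := by
  rw [← ENNReal.ofReal_le_ofReal_iff hε, ← edist_dist]
  exact (eVariationOn.edist_le u hx hy).trans h

theorem eVariationOn_Icc_le_of_dist_le_sub {u : α → E} {B : α → ℝ} {p q : α} (hpq : p ≤ q)
    (h : ∀ x y, p ≤ x → x ≤ y → y ≤ q → dist (u x) (u y) ≤ B y - B x) :
    eVariationOn u (Icc p q) ≤ ENNReal.ofReal (B q - B p) := by
  have hB : MonotoneOn B (Icc p q) := fun x hx y hy hxy =>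
    sub_nonneg.1 (dist_nonneg.trans (h x y hx.1 hxy hy.2))
  calc eVariationOn u (Icc p q) ≤ eVariationOn B (Icc p q) := by
        refine eVariationOn_le_of_dist_le fun x hx y hy => ?_
        rcases le_total x y with hxy | hxy
        · rw [dist_comm (B x)]
          exact (h x y hx.1 hxy hy.2).trans (le_abs_self _)
        · rw [dist_comm (u x)]
          exact (h y x hy.1 hxy hx.2).trans (le_abs_self _)
    _ = _ := by
        simpa only [inter_self] using
          hB.eVariationOn_eq (left_mem_Icc.2 hpq) (right_mem_Icc.2 hpq)

end PseudoMetric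

section PseudoEMetric

variable [PseudoEMetricSpace E]

theorem eVariationOn_le_of_forall_Icc {u : α → E} {C : ℝ≥0∞} {s : Set α} (hs : s.OrdConnected)
    (h : ∀ p ∈ s, ∀ q ∈ s, p ≤ q → eVariationOn u (Icc p q) ≤ C) : eVariationOn u s ≤ C := by
  rw [eVariationOn.eq_biSup_inter_Icc]
  refine iSup₂_le fun p hp => ?_
  rw [inter_eq_right.2 (hs.out hp.1 hp.2.1)]
  exact h _ hp.1 _ hp.2.1 hp.2.2

theorem eVariationOn_Icc_add_Icc (u : α → E) {x y z : α} (hxy : x ≤ y) (hyz : y ≤ z) :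
    eVariationOn u (Icc x y) + eVariationOn u (Icc y z) = eVariationOn u (Icc x z) := by
  simpa only [univ_inter] using eVariationOn.Icc_add_Icc u (s := univ) hxy hyz (mem_univ _)

theorem sum_eVariationOn_Icc_le {u : α → E} {t : ℕ → α} (ht : Monotone t) (S : Finset ℕ) :
    ∀ N : Set α, (∀ k ∈ S, Icc (t k) (t (k + 1)) ⊆ N) →
      ∑ k ∈ S, eVariationOn u (Icc (t k) (t (k + 1))) ≤ eVariationOn u N := by
  induction S using Finset.induction_on_max with
  | empty => intro N _; simp
  | insert k S hk ih =>
    intro N hN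
    have hkS : k ∉ S := fun h => lt_irrefl _ (hk k h)
    have h_init : ∑ i ∈ S, eVariationOn u (Icc (t i) (t (i + 1))) ≤
        eVariationOn u (N ∩ Iic (t k)) :=
      ih _ fun i hi => subset_inter (hN i (Finset.mem_insert_of_mem hi))
        fun x hx => hx.2.trans (ht (hk i hi))
    have h_last : eVariationOn u (Icc (t k) (t (k + 1))) ≤ eVariationOn u (N ∩ Ici (t k)) :=
      eVariationOn.mono _ (subset_inter (hN k (Finset.mem_insert_self _ _)) fun x hx => hx.1)
    rw [Finset.sum_insert hkS, add_comm]
    calc _ ≤ eVariationOn u (N ∩ Iic (t k)) + eVariationOn u (N ∩ Ici (t k)) :=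
          add_le_add h_init h_last
      _ ≤ eVariationOn u (N ∩ Iic (t k) ∪ N ∩ Ici (t k)) :=
          eVariationOn.add_le_union u fun x hx y hy => le_trans hx.2 hy.2
      _ ≤ eVariationOn u N :=
          eVariationOn.mono _ (union_subset inter_subset_left inter_subset_left)

theorem eVariationOn_comp_neg_Icc (u : ℝ → E) (p q : ℝ) :
    eVariationOn (fun x => u (-x)) (Icc p q) = eVariationOn u (Icc (-q) (-p)) := by
  rw [← image_neg_Icc]
  exact eVariationOn.comp_eq_of_antitoneOn u Neg.neg fun _ _ _ _ h => neg_le_neg h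

end PseudoEMetric

theorem eVariationOn_add_le [SeminormedAddCommGroup E] (u v : α → E) (s : Set α) :
    eVariationOn (u + v) s ≤ eVariationOn u s + eVariationOn v s :=
  eVariationOn_le_add_of_dist_le fun _ _ _ _ => dist_add_add_le _ _ _ _

theorem eVariationOn_sub_le [SeminormedAddCommGroup E] (u v : α → E) (s : Set α) :
    eVariationOn (u - v) s ≤ eVariationOn u s + eVariationOn v s :=
  eVariationOn_le_add_of_dist_le fun _ _ _ _ => dist_sub_sub_le _ _ _ _

theorem eVariationOn_max_le (u v : α → ℝ) (s : Set α) :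
    eVariationOn (fun x => max (u x) (v x)) s ≤ eVariationOn u s + eVariationOn v s :=
  eVariationOn_le_add_of_dist_le fun _ _ _ _ => (abs_max_sub_max_le_max _ _ _ _).trans
    (max_le_add_of_nonneg (abs_nonneg _) (abs_nonneg _))

theorem eVariationOn_abs_le (u : α → ℝ) (s : Set α) :
    eVariationOn (fun x => |u x|) s ≤ eVariationOn u s :=
  eVariationOn_le_of_dist_le fun _ _ _ _ => abs_abs_sub_abs_le _ _

theorem eVariationOn_max_const_le (u : α → ℝ) (c : ℝ) (s : Set α) :
    eVariationOn (fun x => max (u x) c) s ≤ eVariationOn u s :=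
  eVariationOn_le_of_dist_le fun _ _ _ _ => abs_max_sub_max_le_abs _ _ _

-- With `W` the variation function of `h`, the increments of `W + (G - h)` dominate those of `G`.
theorem eVariationOn_le_of_right_dominated {G h : α → ℝ} {p q : α} (hpq : p ≤ q)
    (hle : ∀ x ∈ Icc p q, h x ≤ G x)
    (hR : ∀ x y, p ≤ x → x < y → y ≤ q → G y < G x → ∀ δ > 0, ∃ t ∈ Icc x y, G x - δ ≤ h t) :
    eVariationOn G (Icc p q) ≤ eVariationOn h (Icc p q) + ENNReal.ofReal (G q - h q) := by
  by_cases hfin : eVariationOn h (Icc p q) = ⊤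
  · simp only [hfin, top_add, le_top]
  set W := variationOnFromTo h (Icc p q) p
  have hW : ∀ x y, p ≤ x → x ≤ y → y ≤ q → |h y - h x| ≤ W y - W x := fun x y hx hxy hy =>
    variationOnFromTo.abs_sub_le_sub_of_le (BoundedVariationOn.locallyBoundedVariationOn hfin)
      (left_mem_Icc.2 hpq) ⟨hx, hxy.trans hy⟩ ⟨hx.trans hxy, hy⟩ hxy
  have hWp : W p = 0 := variationOnFromTo.self _ _ _
  have hWq : W q = (eVariationOn h (Icc p q)).toReal := by
    rw [show W q = _ from variationOnFromTo.eq_of_le _ _ hpq, inter_self]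
  have hincr : ∀ x y, p ≤ x → x ≤ y → y ≤ q →
      dist (G x) (G y) ≤ (W y + (G y - h y)) - (W x + (G x - h x)) := by
    intro x y hx hxy hy
    have hWxy := abs_le.1 (hW x y hx hxy hy)
    have hhG := hle y ⟨hx.trans hxy, hy⟩
    rw [Real.dist_eq]
    rcases le_or_gt (G x) (G y) with hG | hG
    · rw [abs_of_nonpos (by linarith)]; linarith
    · rw [abs_of_pos (by linarith)]
      have hne : x < y := lt_of_le_of_ne hxy (by rintro rfl; exact lt_irrefl _ hG)
      refine le_of_forall_pos_le_add fun δ hδ => ?_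
      obtain ⟨t, ht, hGt⟩ := hR x y hx hne hy hG (δ / 2) (by linarith)
      have hWxt := abs_le.1 (hW x t hx ht.1 (ht.2.trans hy))
      have hWty := abs_le.1 (hW t y (hx.trans ht.1) ht.2 hy)
      linarith
  calc eVariationOn G (Icc p q)
      ≤ ENNReal.ofReal ((W q + (G q - h q)) - (W p + (G p - h p))) :=
        eVariationOn_Icc_le_of_dist_le_sub (B := fun x => W x + (G x - h x)) hpq hincr
    _ ≤ ENNReal.ofReal ((eVariationOn h (Icc p q)).toReal + (G q - h q)) :=
        ENNReal.ofReal_le_ofReal (by linarith [hle p (left_mem_Icc.2 hpq)])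
    _ = _ := by
        rw [ENNReal.ofReal_add ENNReal.toReal_nonneg
          (sub_nonneg.2 (hle q (right_mem_Icc.2 hpq))), ENNReal.ofReal_toReal hfin]

section CumulativeVariation

/-- `V` is a primitive of the variation of `f`: its increment over an interval is the variation of
`f` there. Only the increments of `V` are determined by `f`. -/
structure IsCumulativeVariation [PseudoEMetricSpace E] (f : α → E) (V : α → ℝ) : Prop where
  monotone : Monotone V
  eVariationOn_Icc : ∀ x y, x ≤ y → eVariationOn f (Icc x y) = ENNReal.ofReal (V y - V x)

theorem exists_isCumulativeVariation [Nonempty α] [PseudoEMetricSpace E] {f : α → E}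
    (hf : LocallyBoundedVariationOn f univ) : ∃ V, IsCumulativeVariation f V := by
  inhabit α
  refine ⟨variationOnFromTo f univ default,
    monotoneOn_univ.1 (variationOnFromTo.monotoneOn hf (mem_univ _)), fun x y hxy => ?_⟩
  have h_ne_top := hf x y (mem_univ _) (mem_univ _)
  rw [variationOnFromTo.sub_right hf (mem_univ _) (mem_univ _) (mem_univ _),
    variationOnFromTo.eq_of_le _ _ hxy, ENNReal.ofReal_toReal h_ne_top, univ_inter]

namespace IsCumulativeVariation

variable {V : α → ℝ}

theorem sub_le_toReal_eVariationOn [PseudoEMetricSpace E] {f : α → E}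
    (hV : IsCumulativeVariation f V) (hf : BoundedVariationOn f univ) {x y : α} (hxy : x ≤ y) :
    V y - V x ≤ (eVariationOn f univ).toReal := by
  rw [← ENNReal.ofReal_le_iff_le_toReal hf, ← hV.eVariationOn_Icc x y hxy]
  exact eVariationOn.mono f (subset_univ _)

theorem dist_le_dist [PseudoMetricSpace E] {f : α → E} (hV : IsCumulativeVariation f V) (x y : α) :
    dist (f x) (f y) ≤ dist (V x) (V y) := by
  wlog hxy : x ≤ y generalizing x y
  · rw [dist_comm, dist_comm (V x)]
    exact this y x (le_of_not_ge hxy)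
  have h_nonneg := sub_nonneg.2 (hV.monotone hxy)
  rw [dist_comm (V x), Real.dist_eq, abs_of_nonneg h_nonneg]
  exact dist_le_of_eVariationOn_le h_nonneg (hV.eVariationOn_Icc x y hxy).le
    (left_mem_Icc.2 hxy) (right_mem_Icc.2 hxy)

theorem abs_sub_le {f : α → ℝ} (hV : IsCumulativeVariation f V) {x y : α} (hxy : x ≤ y) :
    |f y - f x| ≤ V y - V x := by
  simpa only [Real.dist_eq, abs_of_nonneg (sub_nonneg.2 (hV.monotone hxy))] using
    hV.dist_le_dist y x

theorem exists_lipschitzWith_comp {f : α → ℝ} (hV : IsCumulativeVariation f V) :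
    ∃ φ : ℝ → ℝ, LipschitzWith 1 φ ∧ f = φ ∘ V := by
  obtain ⟨ψ, rfl⟩ : ∃ ψ : ℝ → ℝ, f = ψ ∘ V := by
    refine (Function.factorsThrough_iff f).1 fun x y hxy => dist_le_zero.1 ?_
    simpa only [hxy, dist_self] using hV.dist_le_dist x y
  have hψ : LipschitzOnWith 1 ψ (range V) := LipschitzOnWith.of_dist_le_mul <| by
    rintro _ ⟨x, rfl⟩ _ ⟨y, rfl⟩
    rw [NNReal.coe_one, one_mul]
    exact hV.dist_le_dist x y
  obtain ⟨φ, hφ, h_eq⟩ := hψ.extend_real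
  exact ⟨φ, hφ, funext fun x => h_eq (mem_range_self x)⟩

theorem continuousAt [TopologicalSpace α] [PseudoMetricSpace E] {f : α → E}
    (hV : IsCumulativeVariation f V) {x : α} (hx : ContinuousAt V x) : ContinuousAt f x :=
  tendsto_iff_dist_tendsto_zero.2 <| squeeze_zero (fun _ => dist_nonneg)
    (fun y => hV.dist_le_dist y x) (tendsto_iff_dist_tendsto_zero.1 hx)

end IsCumulativeVariation

end CumulativeVariation

end Variation

section Averages

variable {f g h : ℝ → ℝ} {a b c x y A B K ε : ℝ}

/-- The functions for which the suprema defining `uMax f` are finite: for these `uMax f` is the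
maximal function, whereas in general the integral or the supremum may take its junk value `0`. -/
structure FiniteMax (f : ℝ → ℝ) : Prop where
  intervalIntegrable : ∀ a b, IntervalIntegrable f volume a b
  bddAbove : ∀ x, BddAbove {y | ∃ a b : ℝ, a < b ∧ a ≤ x ∧ x ≤ b ∧ y = mAvg f a b}

theorem integral_abs_nonneg (hab : a ≤ b) : 0 ≤ ∫ t in a..b, |f t| :=
  intervalIntegral.integral_nonneg hab fun _ _ => abs_nonneg _

theorem integral_abs_le (hab : a ≤ b) (hK : ∀ t ∈ Ioc a b, |f t| ≤ K) :
    ∫ t in a..b, |f t| ≤ K * (b - a) := by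
  have h_norm := intervalIntegral.norm_integral_le_of_norm_le_const (a := a) (b := b)
    (f := fun t => |f t|) (C := K) (by simpa only [uIoc_of_le hab, Real.norm_eq_abs, abs_abs])
  rw [abs_of_nonneg (sub_nonneg.2 hab)] at h_norm
  exact (le_abs_self _).trans h_norm

theorem mAvg_nonneg (hab : a ≤ b) : 0 ≤ mAvg f a b :=
  div_nonneg (integral_abs_nonneg hab) (sub_nonneg.2 hab)

theorem mAvg_le_iff (hab : a < b) : mAvg f a b ≤ c ↔ ∫ t in a..b, |f t| ≤ c * (b - a) :=
  div_le_iff₀ (sub_pos.2 hab)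

theorem lt_mAvg_iff (hab : a < b) : c < mAvg f a b ↔ c * (b - a) < ∫ t in a..b, |f t| :=
  lt_div_iff₀ (sub_pos.2 hab)

theorem mAvg_le (hab : a < b) (hK : ∀ t ∈ Ioc a b, |f t| ≤ K) : mAvg f a b ≤ K :=
  (mAvg_le_iff hab).2 (integral_abs_le hab.le hK)

theorem mAvg_comp_neg (f : ℝ → ℝ) (a b : ℝ) : mAvg (fun t => f (-t)) a b = mAvg f (-b) (-a) := by
  unfold mAvg
  rw [intervalIntegral.integral_comp_neg (fun t => |f t|), neg_sub_neg]

theorem uMax_le (hK : ∀ a b, a < b → a ≤ x → x ≤ b → mAvg f a b ≤ K) : uMax f x ≤ K := by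
  refine csSup_le ⟨_, x, x + 1, by linarith, le_rfl, by linarith, rfl⟩ ?_
  rintro _ ⟨a, b, hab, hax, hxb, rfl⟩
  exact hK a b hab hax hxb

theorem exists_lt_mAvg_of_lt_uMax (hK : K < uMax f x) :
    ∃ a b, a < b ∧ a ≤ x ∧ x ≤ b ∧ K < mAvg f a b := by
  by_contra! hcon
  exact hK.not_ge (uMax_le hcon)

theorem uMax_comp_neg (f : ℝ → ℝ) (x : ℝ) : uMax (fun t => f (-t)) x = uMax f (-x) := by
  unfold uMax
  congr 1
  ext y
  constructor
  · rintro ⟨a, b, hab, hax, hxb, rfl⟩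
    exact ⟨-b, -a, by linarith, by linarith, by linarith, mAvg_comp_neg f a b⟩
  · rintro ⟨a, b, hab, hax, hxb, rfl⟩
    exact ⟨-b, -a, by linarith, by linarith, by linarith,
      by rw [mAvg_comp_neg, neg_neg, neg_neg]⟩

theorem uMax_congr_ae (hfg : f =ᵐ[volume] g) : uMax f = uMax g := by
  have h_avg : ∀ a b, mAvg f a b = mAvg g a b := fun a b => by
    unfold mAvg
    rw [intervalIntegral.integral_congr_ae]
    filter_upwards [hfg] with t ht _
    rw [ht]
  funext x
  simp only [uMax, h_avg]

namespace FiniteMax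

theorem comp_neg (hf : FiniteMax f) : FiniteMax fun t => f (-t) where
  intervalIntegrable a b := by
    simpa only [zero_sub, neg_neg] using (hf.intervalIntegrable (-a) (-b)).comp_sub_left 0
  bddAbove x := by
    obtain ⟨K, hK⟩ := hf.bddAbove (-x)
    refine ⟨K, ?_⟩
    rintro _ ⟨a, b, hab, hax, hxb, rfl⟩
    exact hK ⟨-b, -a, by linarith, by linarith, by linarith, mAvg_comp_neg f a b⟩

theorem le_integral_abs (hf : FiniteMax f) (hab : a ≤ b) (hK : ∀ t ∈ Ioo a b, K ≤ |f t|) :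
    K * (b - a) ≤ ∫ t in a..b, |f t| := by
  have h_mono := intervalIntegral.integral_mono_on_of_le_Ioo hab
    (intervalIntegrable_const (c := K)) (hf.intervalIntegrable a b).abs hK
  rwa [intervalIntegral.integral_const, smul_eq_mul, mul_comm] at h_mono

theorem integral_abs_add (hf : FiniteMax f) (a b c : ℝ) :
    (∫ t in a..b, |f t|) + ∫ t in b..c, |f t| = ∫ t in a..c, |f t| :=
  intervalIntegral.integral_add_adjacent_intervals (hf.intervalIntegrable _ _).abs
    (hf.intervalIntegrable _ _).abs

theorem mAvg_le_uMax (hf : FiniteMax f) (hab : a < b) (hax : a ≤ x) (hxb : x ≤ b) :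
    mAvg f a b ≤ uMax f x :=
  le_csSup (hf.bddAbove x) ⟨a, b, hab, hax, hxb, rfl⟩

theorem integral_le_uMax (hf : FiniteMax f) (hax : a ≤ x) (hxb : x ≤ b) :
    ∫ t in a..b, |f t| ≤ uMax f x * (b - a) := by
  rcases (hax.trans hxb).eq_or_lt with rfl | hab
  · simp only [intervalIntegral.integral_same, sub_self, mul_zero, le_refl]
  · exact (mAvg_le_iff hab).1 (hf.mAvg_le_uMax hab hax hxb)

theorem uMax_nonneg (hf : FiniteMax f) (x : ℝ) : 0 ≤ uMax f x :=
  (mAvg_nonneg (lt_add_one x).le).trans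
    (hf.mAvg_le_uMax (lt_add_one x) le_rfl (lt_add_one x).le)

theorem exists_lt_mAvg_oneSided (hf : FiniteMax f) (hK : K < uMax f x) :
    (∃ b, x < b ∧ K < mAvg f x b) ∨ ∃ a, a < x ∧ K < mAvg f a x := by
  obtain ⟨a, b, hab, hax, hxb, h_lt⟩ := exists_lt_mAvg_of_lt_uMax hK
  rcases hax.eq_or_lt with rfl | hax
  · exact Or.inl ⟨b, hab, h_lt⟩
  rcases hxb.eq_or_lt with rfl | hxb
  · exact Or.inr ⟨a, hab, h_lt⟩
  by_contra! hcon
  have h_right := (mAvg_le_iff hxb).1 (hcon.1 b hxb)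
  have h_left := (mAvg_le_iff hax).1 (hcon.2 a hax)
  rw [lt_mAvg_iff hab] at h_lt
  linarith [hf.integral_abs_add a x b]

theorem uMax_le_oneSided (hf : FiniteMax f) (hr : ∀ b, x < b → mAvg f x b ≤ K)
    (hl : ∀ a, a < x → mAvg f a x ≤ K) : uMax f x ≤ K := by
  by_contra! hcon
  rcases hf.exists_lt_mAvg_oneSided hcon with ⟨b, hb, hK⟩ | ⟨a, ha, hK⟩
  · exact hK.not_ge (hr b hb)
  · exact hK.not_ge (hl a ha)

theorem uMax_le_add (hf : FiniteMax f) (hg : FiniteMax g) (hε : ∀ x, |f x - g x| ≤ ε) (x : ℝ) :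
    uMax f x ≤ uMax g x + ε := by
  refine uMax_le fun a b hab hax hxb => ?_
  rw [mAvg_le_iff hab]
  have hfg : ∀ t, |f t| ≤ |g t| + ε := fun t => by
    linarith [abs_sub_abs_le_abs_sub (f t) (g t), hε t]
  calc ∫ t in a..b, |f t| ≤ ∫ t in a..b, (|g t| + ε) :=
        intervalIntegral.integral_mono_on hab.le (hf.intervalIntegrable a b).abs
          ((hg.intervalIntegrable a b).abs.add intervalIntegrable_const) fun t _ => hfg t
    _ = (∫ t in a..b, |g t|) + ε * (b - a) := by
        rw [intervalIntegral.integral_add (hg.intervalIntegrable a b).abs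
          intervalIntegrable_const, intervalIntegral.integral_const, smul_eq_mul, mul_comm]
    _ ≤ (uMax g x + ε) * (b - a) := by linarith [hg.integral_le_uMax hax hxb]

theorem abs_uMax_sub_le (hf : FiniteMax f) (hg : FiniteMax g) (hε : ∀ x, |f x - g x| ≤ ε)
    (x : ℝ) : |uMax f x - uMax g x| ≤ ε := by
  have hfg := hf.uMax_le_add hg hε x
  have hgf := hg.uMax_le_add hf (fun x => abs_sub_comm (f x) (g x) ▸ hε x) x
  exact abs_le.2 ⟨by linarith, by linarith⟩

end FiniteMax

end Averages

/-! ### The variation of the maximal function -/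

section OneSided

variable {f h : ℝ → ℝ} {b x K p q : ℝ}

/-- The maximal function over the intervals with left endpoint `x`, truncated below by `h`.
Its mirror image is obtained by reflecting `f` and `h`. -/
noncomputable def rightMax (f h : ℝ → ℝ) (x : ℝ) : ℝ :=
  sSup {y | y = h x ∨ ∃ b, x < b ∧ y = mAvg f x b}

theorem rightMax_le (hK : h x ≤ K) (h_avg : ∀ b, x < b → mAvg f x b ≤ K) : rightMax f h x ≤ K := by
  refine csSup_le ⟨h x, Or.inl rfl⟩ ?_
  rintro _ (rfl | ⟨b, hb, rfl⟩)
  · exact hK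
  · exact h_avg b hb

namespace FiniteMax

theorem bddAbove_rightMax (hf : FiniteMax f) (h : ℝ → ℝ) (x : ℝ) :
    BddAbove {y | y = h x ∨ ∃ b, x < b ∧ y = mAvg f x b} := by
  refine ⟨max (h x) (uMax f x), ?_⟩
  rintro _ (rfl | ⟨b, hb, rfl⟩)
  · exact le_max_left _ _
  · exact le_max_of_le_right (hf.mAvg_le_uMax hb le_rfl hb.le)

theorem le_rightMax (hf : FiniteMax f) (h : ℝ → ℝ) (x : ℝ) : h x ≤ rightMax f h x :=
  le_csSup (hf.bddAbove_rightMax h x) (Or.inl rfl)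

theorem mAvg_le_rightMax (hf : FiniteMax f) (hb : x < b) : mAvg f x b ≤ rightMax f h x :=
  le_csSup (hf.bddAbove_rightMax h x) (Or.inr ⟨b, hb, rfl⟩)

theorem rightMax_le_uMax (hf : FiniteMax f) (hx : h x ≤ uMax f x) : rightMax f h x ≤ uMax f x :=
  rightMax_le hx fun _ hb => hf.mAvg_le_uMax hb le_rfl hb.le

/- If `rightMax f h` decreases from `x` to `y` while `|f| ≤ h ≤ c` on `[x, y]`, then splitting a
near-optimal interval `[x, b]` at `y` bounds its average by `c`. -/
theorem eVariationOn_rightMax_le (hf : FiniteMax f) (hpq : p ≤ q)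
    (hfh : ∀ x ∈ Icc p q, |f x| ≤ h x) :
    eVariationOn (rightMax f h) (Icc p q) ≤
      eVariationOn h (Icc p q) + ENNReal.ofReal (rightMax f h q - h q) := by
  refine eVariationOn_le_of_right_dominated hpq (fun x _ => hf.le_rightMax h x) ?_
  intro x y hx hxy hy hG δ hδ
  by_contra! hcon
  set c := max (rightMax f h x - δ) (rightMax f h y)
  have hhc : ∀ t ∈ Icc x y, h t ≤ c := fun t ht => (hcon t ht).le.trans (le_max_left _ _)
  have hfc : ∀ t ∈ Icc x y, |f t| ≤ c := fun t ht =>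
    (hfh t ⟨hx.trans ht.1, ht.2.trans hy⟩).trans (hhc t ht)
  have h_le : rightMax f h x ≤ c := by
    refine rightMax_le (hhc x (left_mem_Icc.2 hxy.le)) fun b hb => ?_
    rcases le_or_gt b y with hby | hby
    · exact mAvg_le hb fun t ht => hfc t ⟨ht.1.le, ht.2.trans hby⟩
    · have h_left := integral_abs_le hxy.le fun t ht => hfc t (Ioc_subset_Icc_self ht)
      have h_right := (mAvg_le_iff hby).1
        ((hf.mAvg_le_rightMax (h := h) hby).trans (le_max_right _ _ : _ ≤ c))
      rw [mAvg_le_iff hb]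
      linarith [hf.integral_abs_add x y b]
  exact absurd h_le (not_le.2 (max_lt (by linarith) hG))

theorem uMax_eq_max_rightMax (hf : FiniteMax f) (hx : h x ≤ uMax f x) :
    uMax f x =
      max (rightMax f h x) (rightMax (fun t => f (-t)) (fun t => h (-t)) (-x)) := by
  have h_neg : uMax (fun t => f (-t)) (-x) = uMax f x := by rw [uMax_comp_neg, neg_neg]
  refine le_antisymm (hf.uMax_le_oneSided ?_ ?_) (max_le (hf.rightMax_le_uMax hx) ?_)
  · exact fun b hb => le_max_of_le_left (hf.mAvg_le_rightMax hb)
  · intro a ha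
    refine le_max_of_le_right ?_
    have h_avg := hf.comp_neg.mAvg_le_rightMax (h := fun t => h (-t)) (neg_lt_neg ha)
    rwa [mAvg_comp_neg, neg_neg, neg_neg] at h_avg
  · rw [← h_neg]
    exact hf.comp_neg.rightMax_le_uMax (by rwa [h_neg, neg_neg])

theorem eVariationOn_uMax_le (hf : FiniteMax f) (hpq : p ≤ q)
    (hfh : ∀ x ∈ Icc p q, |f x| ≤ h x) (hhg : ∀ x ∈ Icc p q, h x ≤ uMax f x) :
    eVariationOn (uMax f) (Icc p q) ≤ 2 * eVariationOn h (Icc p q) +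
      ENNReal.ofReal (uMax f p - h p) + ENNReal.ofReal (uMax f q - h q) := by
  have h_right : eVariationOn (rightMax f h) (Icc p q) ≤
      eVariationOn h (Icc p q) + ENNReal.ofReal (uMax f q - h q) := by
    refine (hf.eVariationOn_rightMax_le hpq hfh).trans ?_
    gcongr
    exact hf.rightMax_le_uMax (hhg q (right_mem_Icc.2 hpq))
  set R := rightMax (fun t => f (-t)) (fun t => h (-t))
  have hRp : R (-p) ≤ uMax f p := by
    rw [hf.uMax_eq_max_rightMax (hhg p (left_mem_Icc.2 hpq))]
    exact le_max_right _ _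
  have h_left : eVariationOn (fun x => R (-x)) (Icc p q) ≤
      eVariationOn h (Icc p q) + ENNReal.ofReal (uMax f p - h p) := by
    rw [eVariationOn_comp_neg_Icc]
    refine (hf.comp_neg.eVariationOn_rightMax_le (neg_le_neg hpq) fun x hx =>
      hfh (-x) ⟨le_neg_of_le_neg hx.2, neg_le_of_neg_le hx.1⟩).trans ?_
    rw [eVariationOn_comp_neg_Icc, neg_neg, neg_neg]
    gcongr
  calc eVariationOn (uMax f) (Icc p q)
      = eVariationOn (fun x => max (rightMax f h x) (R (-x))) (Icc p q) :=
        eVariationOn.congr fun x hx => hf.uMax_eq_max_rightMax (hhg x hx)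
    _ ≤ _ := (eVariationOn_max_le _ _ _).trans (add_le_add h_right h_left)
    _ = _ := by ring

end FiniteMax

end OneSided

/-! ### Continuity and behaviour at infinity of the maximal function -/

theorem le_of_forall_mul_le_mul_add {A B C : ℝ} (h : ∀ s, 0 ≤ s → A * s ≤ B * s + C) : A ≤ B := by
  by_contra! hBA
  have hd : 0 < A - B := sub_pos.2 hBA
  have h_large := h (|C| / (A - B) + 1) (add_nonneg (div_nonneg (abs_nonneg C) hd.le) zero_le_one)
  have h_cancel : (A - B) * (|C| / (A - B) + 1) = |C| + (A - B) := by field_simp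
  linarith [le_abs_self C]

namespace FiniteMax

variable {f : ℝ → ℝ} {a b x y A B K ε : ℝ}

theorem integral_le_uMax_mul (hf : FiniteMax f) (hax : a ≤ x) (hxb : x ≤ b) (y : ℝ) :
    ∫ t in a..b, |f t| ≤ uMax f y * (b - a + |y - x|) := by
  have h_sub : ∫ t in a..b, |f t| ≤ ∫ t in (min a y)..(max b y), |f t| := by
    linarith [hf.integral_abs_add (min a y) a b, hf.integral_abs_add (min a y) b (max b y),
      integral_abs_nonneg (f := f) (min_le_left a y),
      integral_abs_nonneg (f := f) (le_max_left b y)]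
  refine (h_sub.trans (hf.integral_le_uMax (min_le_right a y) (le_max_right b y))).trans ?_
  gcongr
  · exact hf.uMax_nonneg y
  · grind

theorem lowerSemicontinuous_uMax (hf : FiniteMax f) : LowerSemicontinuous (uMax f) := by
  intro x K hK
  obtain ⟨a, b, hab, hax, hxb, h_avg⟩ := exists_lt_mAvg_of_lt_uMax hK
  have h_cont : Tendsto (fun y => K * (b - a + |y - x|)) (𝓝 x) (𝓝 (K * (b - a))) := by
    have : Continuous fun y => K * (b - a + |y - x|) := by fun_prop
    simpa only [sub_self, abs_zero, add_zero] using this.tendsto x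
  filter_upwards [h_cont.eventually_lt_const ((lt_mAvg_iff hab).1 h_avg)] with y hy
  exact lt_of_mul_lt_mul_right (hy.trans_le (hf.integral_le_uMax_mul hax hxb y))
    (add_nonneg (sub_nonneg.2 hab.le) (abs_nonneg _))

/- Intervals close to `x` have average at most `uMax f x + ε` by assumption, and for the intervals
of length at least `η / 2` moving an endpoint to `x` changes little. -/
theorem upperSemicontinuousAt_uMax (hf : FiniteMax f)
    (hx : ∀ ε > 0, ∀ᶠ t in 𝓝 x, |f t| ≤ uMax f x + ε) : UpperSemicontinuousAt (uMax f) x := by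
  intro K hK
  obtain ⟨c, hc, hcK⟩ := exists_between hK
  obtain ⟨η, hη, hfc⟩ := Metric.eventually_nhds_iff.1 (hx (c - uMax f x) (sub_pos.2 hc))
  have h_small : ∀ᶠ y in 𝓝 x, uMax f x * |y - x| < (c - uMax f x) * (η / 2) := by
    have : Continuous fun y => uMax f x * |y - x| := by fun_prop
    refine (this.tendsto x).eventually_lt_const ?_
    simpa only [sub_self, abs_zero, mul_zero] using mul_pos (sub_pos.2 hc) (half_pos hη)
  filter_upwards [h_small, Metric.ball_mem_nhds x (half_pos hη)] with y hy hyx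
  refine lt_of_le_of_lt (uMax_le fun a b hab hay hyb => ?_) hcK
  rw [Metric.mem_ball, Real.dist_eq] at hyx
  have hyx' := abs_lt.1 hyx
  rcases lt_or_ge (b - a) (η / 2) with h_short | h_long
  · refine mAvg_le hab fun t ht => ?_
    have := hfc (y := t) (by
      rw [Real.dist_eq, abs_lt]
      exact ⟨by linarith [ht.1], by linarith [ht.2]⟩)
    linarith
  · rw [mAvg_le_iff hab]
    have h_move := hf.integral_le_uMax_mul hay hyb x
    rw [abs_sub_comm] at h_move
    linarith [mul_le_mul_of_nonneg_left h_long (sub_pos.2 hc).le]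

theorem abs_le_uMax_add_of_dist_le (hf : FiniteMax f) (hab : a < b) (hax : a ≤ x) (hxb : x ≤ b)
    (hε : ∀ s ∈ Ioo a b, |f y - f s| ≤ ε) : |f y| ≤ uMax f x + ε := by
  have h_low : (|f y| - ε) * (b - a) ≤ ∫ s in a..b, |f s| :=
    hf.le_integral_abs hab.le fun s hs => by
      linarith [abs_sub_abs_le_abs_sub (f y) (f s), hε s hs]
  linarith [le_of_mul_le_mul_right (h_low.trans (hf.integral_le_uMax hax hxb)) (sub_pos.2 hab)]

theorem le_uMax_of_tendsto_atTop (hf : FiniteMax f)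
    (hA : Tendsto (fun t => |f t|) atTop (𝓝 A)) (y : ℝ) : A ≤ uMax f y := by
  refine le_of_forall_pos_le_add fun ε hε => sub_le_iff_le_add.1 ?_
  obtain ⟨T, hT, hyT⟩ := ((eventually_forall_ge_atTop.2
    (hA.eventually_const_le (sub_lt_self A hε))).and (eventually_ge_atTop y)).exists
  refine le_of_forall_mul_le_mul_add (C := uMax f y * (T - y)) fun s hs => ?_
  have h_low := hf.le_integral_abs (le_add_of_nonneg_right hs) fun t ht => hT t ht.1.le
  have h_up := hf.integral_le_uMax (le_refl y) (hyT.trans (le_add_of_nonneg_right hs))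
  linarith [hf.integral_abs_add y T (T + s), integral_abs_nonneg (f := f) hyT]

theorem le_uMax_of_tendsto_atBot (hf : FiniteMax f)
    (hB : Tendsto (fun t => |f t|) atBot (𝓝 B)) (y : ℝ) : B ≤ uMax f y := by
  have h_neg := hf.comp_neg.le_uMax_of_tendsto_atTop (hB.comp tendsto_neg_atTop_atBot) (-y)
  rwa [uMax_comp_neg, neg_neg] at h_neg

theorem integral_abs_le_add_of_tail (hf : FiniteMax f) {r : ℝ} (hr : 0 ≤ r) (hK₀ : 0 ≤ K)
    (hK : ∀ t, r < |t| → |f t| ≤ K) (hab : a ≤ b) :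
    ∫ t in a..b, |f t| ≤ K * (b - a) + ∫ t in (-r)..r, |f t| := by
  set core := (Ioc (-r) r).indicator fun t => |f t|
  have h_int : Integrable core := (integrable_indicator_iff measurableSet_Ioc).2
    ((intervalIntegrable_iff_integrableOn_Ioc_of_le (by linarith)).1
      (hf.intervalIntegrable (-r) r).abs)
  have h_core_nonneg : ∀ t, 0 ≤ core t := fun t => indicator_nonneg (fun _ _ => abs_nonneg _) t
  have hf_le : ∀ t, t ≠ -r → |f t| ≤ K + core t := fun t ht => by
    by_cases htr : t ∈ Ioc (-r) r
    · rw [show core t = |f t| from indicator_of_mem htr _]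
      exact le_add_of_nonneg_left hK₀
    · refine (hK t ?_).trans (le_add_of_nonneg_right (h_core_nonneg t))
      by_contra! hcon
      exact htr ⟨lt_of_le_of_ne (abs_le.1 hcon).1 ht.symm, (abs_le.1 hcon).2⟩
  calc ∫ t in a..b, |f t| ≤ ∫ t in a..b, (K + core t) :=
        intervalIntegral.integral_mono_ae hab (hf.intervalIntegrable a b).abs
          (intervalIntegrable_const.add h_int.intervalIntegrable)
          ((Measure.ae_ne volume (-r)).mono hf_le)
    _ = K * (b - a) + ∫ t in a..b, core t := by
        rw [intervalIntegral.integral_add intervalIntegrable_const h_int.intervalIntegrable,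
          intervalIntegral.integral_const, smul_eq_mul, mul_comm]
    _ ≤ K * (b - a) + ∫ t, core t := by
        rw [intervalIntegral.integral_of_le hab]
        exact add_le_add_right
          (setIntegral_le_integral h_int (Eventually.of_forall h_core_nonneg)) _
    _ = _ := by
        rw [integral_indicator measurableSet_Ioc, intervalIntegral.integral_of_le (by linarith)]

/- An interval containing a point far away from the origin is long or avoids `[-r, r]`. -/
theorem eventually_uMax_le_cocompact (hf : FiniteMax f) (hK : ∀ᶠ t in cocompact ℝ, |f t| ≤ K)
    (hε : 0 < ε) : ∀ᶠ x in cocompact ℝ, uMax f x ≤ K + ε := by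
  rw [← Metric.cobounded_eq_cocompact] at hK
  obtain ⟨r₀, -, hr₀⟩ := hasBasis_cobounded_norm.eventually_iff.1 hK
  set r := max r₀ 0
  have hKr : ∀ t, r < |t| → |f t| ≤ K := fun t ht => hr₀ ((le_max_left r₀ 0).trans ht.le)
  have hr : 0 ≤ r := le_max_right r₀ 0
  have hK₀ : 0 ≤ K := (abs_nonneg _).trans
    (hKr (r + 1) ((lt_add_one r).trans_le (le_abs_self _)))
  set C := ∫ t in (-r)..r, |f t|
  filter_upwards [(tendsto_norm_cocompact_atTop (E := ℝ)).eventually_gt_atTop (r + C / ε)]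
    with x hx
  rw [Real.norm_eq_abs] at hx
  refine uMax_le fun a b hab hax hxb => ?_
  rcases le_or_gt (C / ε) (b - a) with h_long | h_short
  · rw [mAvg_le_iff hab]
    rw [div_le_iff₀ hε] at h_long
    linarith [hf.integral_abs_le_add_of_tail hr hK₀ hKr hab.le]
  · refine (mAvg_le hab fun t ht => hKr t ?_).trans (le_add_of_nonneg_right hε.le)
    have h_close : |x - t| ≤ b - a := abs_le.2 ⟨by linarith [ht.2], by linarith [ht.1]⟩
    linarith [abs_sub_abs_le_abs_sub x t]

theorem tendsto_uMax_cocompact (hf : FiniteMax f) (hA : Tendsto (fun t => |f t|) atTop (𝓝 A))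
    (hB : Tendsto (fun t => |f t|) atBot (𝓝 B)) :
    Tendsto (uMax f) (cocompact ℝ) (𝓝 (max A B)) := by
  refine tendsto_order.2 ⟨fun K hK => Eventually.of_forall fun y => hK.trans_le
    (max_le (hf.le_uMax_of_tendsto_atTop hA y) (hf.le_uMax_of_tendsto_atBot hB y)), ?_⟩
  intro K hK
  obtain ⟨c, hc, hcK⟩ := exists_between hK
  have h_tail : ∀ᶠ t in cocompact ℝ, |f t| ≤ c := by
    rw [cocompact_eq_atBot_atTop, eventually_sup]
    exact ⟨hB.eventually_le_const ((le_max_right _ _).trans_lt hc),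
      hA.eventually_le_const ((le_max_left _ _).trans_lt hc)⟩
  filter_upwards [hf.eventually_uMax_le_cocompact h_tail (half_pos (sub_pos.2 hcK))] with x hx
  linarith

end FiniteMax

namespace BVfun

variable {f : ℝ → ℝ}

theorem exists_bound (hf : BVfun f) : ∃ M, ∀ x, |f x| ≤ M :=
  ⟨(eVariationOn f univ).toReal + |f 0|, fun x => by
    have h_dist := hf.dist_le (mem_univ x) (mem_univ 0)
    rw [Real.dist_eq] at h_dist
    linarith [abs_sub_abs_le_abs_sub (f x) (f 0)]⟩

theorem finiteMax (hf : BVfun f) : FiniteMax f where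
  intervalIntegrable a b := by
    obtain ⟨p, q, hp, hq, rfl⟩ :=
      (BoundedVariationOn.locallyBoundedVariationOn hf).exists_monotoneOn_sub_monotoneOn
    exact (hp.mono (subset_univ _)).intervalIntegrable.sub
      (hq.mono (subset_univ _)).intervalIntegrable
  bddAbove x := by
    obtain ⟨M, hM⟩ := hf.exists_bound
    refine ⟨M, ?_⟩
    rintro _ ⟨a, b, hab, -, -, rfl⟩
    exact mAvg_le hab fun t _ => hM t

theorem abs (hf : BVfun f) : BVfun fun x => |f x| :=
  ne_top_of_le_ne_top hf (eVariationOn_abs_le f univ)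

theorem eventually_small_variation (hf : BVfun f) (x : ℝ) {ε : ℝ} (hε : 0 < ε) :
    ∀ᶠ η in 𝓝[>] 0, eVariationOn f (Ico (x - η) x) ≤ ENNReal.ofReal ε ∧
      eVariationOn f (Ioc x (x + η)) ≤ ENNReal.ofReal ε := by
  have h_left := BoundedVariationOn.tendsto_eVariationOn_Ico_zero hf x
  have h_right := BoundedVariationOn.tendsto_eVariationOn_Ioc_zero hf x
  simp only [univ_inter, nhdsWithin_univ] at h_left h_right
  have h_sub : Tendsto (fun η => x - η) (𝓝[>] 0) (𝓝 x) :=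
    ((tendsto_const_nhds.sub tendsto_id).mono_right (by simp)).mono_left nhdsWithin_le_nhds
  have h_add : Tendsto (fun η => x + η) (𝓝[>] 0) (𝓝 x) :=
    ((tendsto_const_nhds.add tendsto_id).mono_right (by simp)).mono_left nhdsWithin_le_nhds
  have hε' : (0 : ℝ≥0∞) < ENNReal.ofReal ε := ENNReal.ofReal_pos.2 hε
  filter_upwards [(h_left.comp h_sub).eventually_le_const hε',
    (h_right.comp h_add).eventually_le_const hε'] with η h_left h_right
  exact ⟨h_left, h_right⟩

theorem eventually_abs_le_uMax_add (hf : BVfun f) {x : ℝ} (hx : |f x| ≤ uMax f x) {ε : ℝ}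
    (hε : 0 < ε) : ∀ᶠ t in 𝓝 x, |f t| ≤ uMax f x + ε := by
  obtain ⟨η, ⟨h_left, h_right⟩, hη⟩ :=
    ((hf.eventually_small_variation x hε).and self_mem_nhdsWithin).exists
  filter_upwards [Ioo_mem_nhds (sub_lt_self x hη) (lt_add_of_pos_right x hη)] with t ht
  rcases lt_trichotomy t x with htx | rfl | htx
  · exact hf.finiteMax.abs_le_uMax_add_of_dist_le (sub_lt_self x hη) (sub_le_self x hη.le) le_rfl
      fun s hs => dist_le_of_eVariationOn_le hε.le h_left ⟨ht.1.le, htx⟩ (Ioo_subset_Ico_self hs)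
  · linarith
  · exact hf.finiteMax.abs_le_uMax_add_of_dist_le (lt_add_of_pos_right x hη) le_rfl
      (le_add_of_nonneg_right hη.le)
      fun s hs => dist_le_of_eVariationOn_le hε.le h_right ⟨htx, ht.2.le⟩ (Ioo_subset_Ioc_self hs)

theorem continuous_uMax (hf : BVfun f) (hdom : ∀ x, |f x| ≤ uMax f x) : Continuous (uMax f) :=
  continuous_iff_lower_upperSemicontinuous.2 ⟨hf.finiteMax.lowerSemicontinuous_uMax, fun x =>
    hf.finiteMax.upperSemicontinuousAt_uMax fun _ => hf.eventually_abs_le_uMax_add (hdom x)⟩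

theorem uMax_of_abs_le (hf : BVfun f) (hdom : ∀ x, |f x| ≤ uMax f x) : BVfun (uMax f) := by
  obtain ⟨M, hM⟩ := hf.exists_bound
  have hgM : ∀ x, uMax f x - |f x| ≤ M := fun x => by
    linarith [uMax_le (f := f) (x := x) fun _ _ hab _ _ => mAvg_le hab fun t _ => hM t,
      abs_nonneg (f x)]
  have h_var : eVariationOn (uMax f) univ ≤
      2 * eVariationOn f univ + ENNReal.ofReal M + ENNReal.ofReal M := by
    refine eVariationOn_le_of_forall_Icc ordConnected_univ fun p _ q _ hpq => ?_
    refine (hf.finiteMax.eVariationOn_uMax_le (h := fun x => |f x|) hpq (fun _ _ => le_rfl)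
      (fun x _ => hdom x)).trans ?_
    gcongr
    exacts [(eVariationOn_abs_le f _).trans (eVariationOn.mono _ (subset_univ _)), hgM p, hgM q]
  refine ne_top_of_le_ne_top ?_ h_var
  finiteness [show eVariationOn f univ ≠ ∞ from hf]

end BVfun

/-! ### Asymptotic variation of a sequence -/

section AsympVar

variable {α E : Type*} [LinearOrder α] [PseudoEMetricSpace E]

/-- The upper limit of the variations of `D j` on `s` is at most `c`. -/
def AsympVarLE (D : ℕ → α → E) (s : Set α) (c : ℝ≥0∞) : Prop :=
  ∀ ε : ℝ, 0 < ε → ∀ᶠ j in atTop, eVariationOn (D j) s ≤ c + ENNReal.ofReal ε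

namespace AsympVarLE

variable {D : ℕ → α → E} {r s t : Set α} {c d : ℝ≥0∞}

theorem of_eventually (h : ∀ᶠ j in atTop, eVariationOn (D j) s ≤ c) : AsympVarLE D s c :=
  fun _ _ => h.mono fun _ hj => hj.trans le_self_add

theorem mono (h : AsympVarLE D s c) (hts : t ⊆ s) (hcd : c ≤ d) : AsympVarLE D t d :=
  fun ε hε => (h ε hε).mono fun j hj =>
    (eVariationOn.mono (D j) hts).trans (hj.trans (add_le_add_left hcd _))

theorem of_forall_pos (h : ∀ ε : ℝ, 0 < ε → AsympVarLE D s (c + ENNReal.ofReal ε)) :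
    AsympVarLE D s c :=
  fun ε hε => (h (ε / 2) (half_pos hε) (ε / 2) (half_pos hε)).mono fun j hj => by
    rwa [add_assoc, ← ENNReal.ofReal_add (half_pos hε).le (half_pos hε).le, add_halves] at hj

theorem of_le_add (hs : AsympVarLE D s c) (ht : AsympVarLE D t d)
    (h : ∀ j, eVariationOn (D j) r ≤ eVariationOn (D j) s + eVariationOn (D j) t) :
    AsympVarLE D r (c + d) := fun ε hε => by
  filter_upwards [hs (ε / 2) (half_pos hε), ht (ε / 2) (half_pos hε)] with j hsj htj
  calc eVariationOn (D j) r
      ≤ (c + ENNReal.ofReal (ε / 2)) + (d + ENNReal.ofReal (ε / 2)) :=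
        (h j).trans (add_le_add hsj htj)
    _ = c + d + ENNReal.ofReal ε := by
        rw [add_add_add_comm, ← ENNReal.ofReal_add (half_pos hε).le (half_pos hε).le, add_halves]

theorem of_le_sum {ι : Type*} {I : Finset ι} {S : ι → Set α} {C : ι → ℝ≥0∞}
    (hS : ∀ i ∈ I, AsympVarLE D (S i) (C i))
    (h : ∀ j, eVariationOn (D j) r ≤ ∑ i ∈ I, eVariationOn (D j) (S i)) :
    AsympVarLE D r (∑ i ∈ I, C i) := fun ε hε => by
  have hδ : 0 < ε / (I.card + 1) := by positivity
  filter_upwards [(eventually_all_finset I).2 fun i hi => hS i hi _ hδ] with j hj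
  calc eVariationOn (D j) r
      ≤ ∑ i ∈ I, (C i + ENNReal.ofReal (ε / (I.card + 1))) := (h j).trans (Finset.sum_le_sum hj)
    _ = ∑ i ∈ I, C i + ENNReal.ofReal (I.card * (ε / (I.card + 1))) := by
        rw [Finset.sum_add_distrib, Finset.sum_const, nsmul_eq_mul,
          ENNReal.ofReal_mul I.card.cast_nonneg, ENNReal.ofReal_natCast]
    _ ≤ _ := by
        gcongr
        rw [mul_div_left_comm]
        exact mul_le_of_le_one_right hε.le ((div_le_one (by positivity)).2 (by linarith))

theorem Icc_union {x y z : α} (hxy : x ≤ y) (hyz : y ≤ z) (h_left : AsympVarLE D (Icc x y) c)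
    (h_right : AsympVarLE D (Icc y z) d) : AsympVarLE D (Icc x z) (c + d) :=
  h_left.of_le_add h_right fun j => (eVariationOn_Icc_add_Icc (D j) hxy hyz).ge

end AsympVarLE

end AsympVar

/-- A sequence `F` tending to `f` in variation and uniformly, at rate `e`, where every function is
dominated everywhere, and not only almost everywhere, by its maximal function. -/
structure BVApprox (f : ℝ → ℝ) (F : ℕ → ℝ → ℝ) (e : ℕ → ℝ) : Prop where
  bv : BVfun f
  bv_seq : ∀ j, BVfun (F j)
  abs_le_uMax : ∀ x, |f x| ≤ uMax f x
  abs_seq_le_uMax : ∀ j x, |F j x| ≤ uMax (F j) x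
  tendsto : Tendsto e atTop (𝓝 0)
  abs_sub_le : ∀ j x, |F j x - f x| ≤ e j
  eVariationOn_sub_le : ∀ j, eVariationOn (F j - f) univ ≤ ENNReal.ofReal (e j)

/-- The sequence of differences of maximal functions, whose variation is to be shown to vanish
asymptotically. -/
noncomputable def maxDiff (f : ℝ → ℝ) (F : ℕ → ℝ → ℝ) (j : ℕ) : ℝ → ℝ := uMax (F j) - uMax f

theorem FiniteMax.eVariationOn_uMax_le_of_band {u : ℝ → ℝ} (hu : FiniteMax u) {s : Set ℝ}
    (hs : s.OrdConnected) {c δ : ℝ} (hdom : ∀ t ∈ s, |u t| ≤ uMax u t)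
    (hlow : ∀ t ∈ s, c ≤ uMax u t) (hup : ∀ t ∈ s, uMax u t ≤ c + δ) :
    eVariationOn (uMax u) s ≤ 2 * eVariationOn u s + 2 * ENNReal.ofReal δ := by
  refine eVariationOn_le_of_forall_Icc hs fun p hp q hq hpq => ?_
  have h_sub : Icc p q ⊆ s := hs.out hp hq
  have h_end : ∀ t ∈ s, uMax u t - max |u t| c ≤ δ := fun t ht => by
    linarith [hup t ht, le_max_right |u t| c]
  calc eVariationOn (uMax u) (Icc p q)
      ≤ 2 * eVariationOn (fun t => max |u t| c) (Icc p q)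
          + ENNReal.ofReal (uMax u p - max |u p| c) + ENNReal.ofReal (uMax u q - max |u q| c) :=
        hu.eVariationOn_uMax_le hpq (fun _ _ => le_max_left _ _)
          fun t ht => max_le (hdom t (h_sub ht)) (hlow t (h_sub ht))
    _ ≤ 2 * eVariationOn u s + ENNReal.ofReal δ + ENNReal.ofReal δ := by
        gcongr
        exacts [(eVariationOn_max_const_le _ _ _).trans
          ((eVariationOn_abs_le _ _).trans (eVariationOn.mono _ h_sub)), h_end p hp, h_end q hq]
    _ = _ := by rw [add_assoc, two_mul (ENNReal.ofReal δ)]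

namespace BVApprox

variable {f : ℝ → ℝ} {F : ℕ → ℝ → ℝ} {e : ℕ → ℝ} {ε : ℝ}

theorem eventually_le (H : BVApprox f F e) (hε : 0 < ε) : ∀ᶠ j in atTop, e j ≤ ε :=
  H.tendsto.eventually_le_const hε

theorem eVariationOn_seq_le (H : BVApprox f F e) (j : ℕ) (s : Set ℝ) :
    eVariationOn (F j) s ≤ eVariationOn f s + ENNReal.ofReal (e j) :=
  calc eVariationOn (F j) s = eVariationOn (f + (F j - f)) s := by rw [add_sub_cancel]
    _ ≤ eVariationOn f s + eVariationOn (F j - f) s := eVariationOn_add_le _ _ _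
    _ ≤ _ := by
      gcongr
      exact (eVariationOn.mono _ (subset_univ _)).trans (H.eVariationOn_sub_le j)

theorem abs_maxDiff_le (H : BVApprox f F e) (j : ℕ) (x : ℝ) : |maxDiff f F j x| ≤ e j :=
  (H.bv_seq j).finiteMax.abs_uMax_sub_le H.bv.finiteMax (H.abs_sub_le j) x

theorem continuous_uMax (H : BVApprox f F e) : Continuous (uMax f) :=
  H.bv.continuous_uMax H.abs_le_uMax

theorem continuous_maxDiff (H : BVApprox f F e) (j : ℕ) : Continuous (maxDiff f F j) :=
  ((H.bv_seq j).continuous_uMax (H.abs_seq_le_uMax j)).sub H.continuous_uMax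

theorem eVariationOn_maxDiff_le_of_band (H : BVApprox f F e) {s : Set ℝ} (hs : s.OrdConnected)
    {c : ℝ} (h_band : ∀ t ∈ s, |uMax f t - c| ≤ ε)
    (h_var : eVariationOn f s ≤ ENNReal.ofReal ε) {j : ℕ} (hj : e j ≤ ε) :
    eVariationOn (maxDiff f F j) s ≤ ENNReal.ofReal (18 * ε) := by
  have h_mul : ∀ k : ℕ, ENNReal.ofReal (k * ε) = k * ENNReal.ofReal ε := fun k => by
    rw [ENNReal.ofReal_mul k.cast_nonneg, ENNReal.ofReal_natCast]
  have h_f : eVariationOn (uMax f) s ≤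
      2 * ENNReal.ofReal ε + 2 * ENNReal.ofReal ((2 : ℕ) * ε) := by
    refine (H.bv.finiteMax.eVariationOn_uMax_le_of_band hs (c := c - ε)
      (fun t _ => H.abs_le_uMax t) (fun t ht => ?_) fun t ht => ?_).trans
        (add_le_add_left (mul_le_mul_right h_var 2) _)
    · linarith [(abs_le.1 (h_band t ht)).1]
    · push_cast
      linarith [(abs_le.1 (h_band t ht)).2]
  have h_F : eVariationOn (uMax (F j)) s ≤
      2 * (ENNReal.ofReal ε + ENNReal.ofReal ε) + 2 * ENNReal.ofReal ((4 : ℕ) * ε) := by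
    have h_close := fun t => abs_le.1 (H.abs_maxDiff_le j t)
    simp only [maxDiff, Pi.sub_apply] at h_close
    refine ((H.bv_seq j).finiteMax.eVariationOn_uMax_le_of_band hs (c := c - 2 * ε)
      (fun t _ => H.abs_seq_le_uMax j t) (fun t ht => ?_) fun t ht => ?_).trans
        (add_le_add_left (mul_le_mul_right ((H.eVariationOn_seq_le j s).trans
          (add_le_add h_var (ENNReal.ofReal_le_ofReal hj))) 2) _)
    · linarith [(abs_le.1 (h_band t ht)).1, (h_close t).1]
    · push_cast
      linarith [(abs_le.1 (h_band t ht)).2, (h_close t).2]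
  calc eVariationOn (maxDiff f F j) s ≤ eVariationOn (uMax (F j)) s + eVariationOn (uMax f) s :=
        _root_.eVariationOn_sub_le _ _ _
    _ ≤ _ := add_le_add h_F h_f
    _ = ENNReal.ofReal ((18 : ℕ) * ε) := by
        simp only [h_mul]
        push_cast
        ring
    _ = _ := by push_cast; rfl

theorem exists_asympVarLE_nhds (H : BVApprox f F e) (x : ℝ) (hε : 0 < ε) :
    ∃ η > 0, AsympVarLE (maxDiff f F) (Icc (x - η) (x + η)) (ENNReal.ofReal ε) := by
  have hδ : 0 < ε / 36 := by linarith
  have h_band : ∀ᶠ η in 𝓝[>] 0, Metric.closedBall x η ⊆ {t | |uMax f t - uMax f x| ≤ ε / 36} :=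
    nhdsWithin_le_nhds (eventually_closedBall_subset
      ((H.continuous_uMax.tendsto x).eventually (Metric.closedBall_mem_nhds _ hδ)))
  obtain ⟨η, ⟨h_band, h_left, h_right⟩, hη⟩ :=
    ((h_band.and (H.bv.eventually_small_variation x hδ)).and self_mem_nhdsWithin).exists
  rw [Real.closedBall_eq_Icc] at h_band
  have hxη : x ≤ x + η := le_add_of_nonneg_right hη.le
  have hηx : x - η ≤ x := sub_le_self x hη.le
  refine ⟨η, hη, AsympVarLE.of_eventually ?_⟩
  filter_upwards [H.eventually_le hδ] with j hj
  have h_cont := H.continuous_maxDiff j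
  rw [← eVariationOn_Icc_add_Icc (maxDiff f F j) hηx hxη,
    ← eVariationOn.eVariationOn_Ico_eq_Icc_of_continuousWithinAt h_cont.continuousWithinAt,
    ← eVariationOn.eVariationOn_Ioc_eq_Icc_of_continuousWithinAt h_cont.continuousWithinAt]
  calc _ ≤ ENNReal.ofReal (18 * (ε / 36)) + ENNReal.ofReal (18 * (ε / 36)) := add_le_add
        (H.eVariationOn_maxDiff_le_of_band ordConnected_Ico
          (fun t ht => h_band ⟨ht.1, ht.2.le.trans hxη⟩) h_left hj)
        (H.eVariationOn_maxDiff_le_of_band ordConnected_Ioc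
          (fun t ht => h_band ⟨hηx.trans ht.1.le, ht.2⟩) h_right hj)
    _ = ENNReal.ofReal ε := by
        rw [← ENNReal.ofReal_add (by positivity) (by positivity)]
        congr 1
        ring

theorem exists_asympVarLE_tails (H : BVApprox f F e) (hε : 0 < ε) :
    ∃ R > 0, AsympVarLE (maxDiff f F) (Iic (-R)) (ENNReal.ofReal ε) ∧
      AsympVarLE (maxDiff f F) (Ici R) (ENNReal.ofReal ε) := by
  have hδ : 0 < ε / 18 := by linarith
  have hδ' : (0 : ℝ≥0∞) < ENNReal.ofReal (ε / 18) := ENNReal.ofReal_pos.2 hδ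
  obtain ⟨c, hc⟩ : ∃ c, Tendsto (uMax f) (cocompact ℝ) (𝓝 c) :=
    ⟨_, H.bv.finiteMax.tendsto_uMax_cocompact
      (BoundedVariationOn.tendsto_atTop_limUnder H.bv.abs)
      (BoundedVariationOn.tendsto_atBot_limUnder H.bv.abs)⟩
  have h_band : ∀ᶠ t in cocompact ℝ, |uMax f t - c| ≤ ε / 18 :=
    hc.eventually (Metric.closedBall_mem_nhds c hδ)
  rw [cocompact_eq_atBot_atTop, eventually_sup] at h_band
  have h_top := BoundedVariationOn.tendsto_eVariationOn_Ici_zero H.bv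
  have h_bot := BoundedVariationOn.tendsto_eVariationOn_Iic_zero H.bv
  simp only [univ_inter, principal_univ, top_inf_eq] at h_top h_bot
  obtain ⟨R, ⟨⟨h_bandR, h_varR⟩, h_bandL, h_varL⟩, hR⟩ :=
    ((((eventually_forall_ge_atTop.2 h_band.2).and (h_top.eventually_le_const hδ')).and
      (tendsto_neg_atTop_atBot.eventually ((eventually_forall_le_atBot.2 h_band.1).and
        (h_bot.eventually_le_const hδ')))).and (eventually_gt_atTop (0 : ℝ))).exists
  rw [show ε = 18 * (ε / 18) by ring]
  exact ⟨R, hR,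
    AsympVarLE.of_eventually ((H.eventually_le hδ).mono fun j hj =>
      H.eVariationOn_maxDiff_le_of_band ordConnected_Iic h_bandL h_varL hj),
    AsympVarLE.of_eventually ((H.eventually_le hδ).mono fun j hj =>
      H.eVariationOn_maxDiff_le_of_band ordConnected_Ici h_bandR h_varR hj)⟩

end BVApprox

/-! ### Almost convex functions -/

/-- Convexity on `[α, β]` up to an error measured by `m`: the slope of `u` on `[x, y]` exceeds the
slope on `[y, z]` by at most `m z - m x`. -/
def AlmostConvex (u m : ℝ → ℝ) (α β : ℝ) : Prop :=
  ∀ x y z, α ≤ x → x < y → y < z → z ≤ β →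
    (u y - u x) / (y - x) ≤ (u z - u y) / (z - y) + (m z - m x)

theorem almostConvex_of_mul_le {u m : ℝ → ℝ} {α β : ℝ}
    (h : ∀ x y z, α ≤ x → x < y → y < z → z ≤ β →
      (z - x) * u y ≤ (z - y) * u x + (y - x) * u z + (y - x) * (z - y) * (m z - m x)) :
    AlmostConvex u m α β := fun x y z hx hxy hyz hz => by
  have hyx : 0 < y - x := sub_pos.2 hxy
  have hzy : 0 < z - y := sub_pos.2 hyz
  have h_slopes : (u z - u y) / (z - y) + (m z - m x) - (u y - u x) / (y - x) =
      ((z - y) * u x + (y - x) * u z + (y - x) * (z - y) * (m z - m x) - (z - x) * u y) /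
        ((y - x) * (z - y)) := by
    field_simp
    ring
  rw [← sub_nonneg, h_slopes]
  exact div_nonneg (sub_nonneg.2 (h x y z hx hxy hyz hz)) (mul_pos hyx hzy).le

namespace AlmostConvex

variable {u w m : ℝ → ℝ} {α β η : ℝ} {a b c d x y h : ℝ}

theorem slope_le (hu : AlmostConvex u m α β) (hm : MonotoneOn m (Icc α β)) (hx : α ≤ x)
    (hxy : x < y) (hyc : y ≤ c) (hcd : c < d) (hd : d ≤ β) :
    (u y - u x) / (y - x) ≤ (u d - u c) / (d - c) + 2 * (m d - m x) := by
  have hxy_m : m x ≤ m y := hm ⟨hx, by linarith⟩ ⟨by linarith, by linarith⟩ hxy.le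
  have hyc_m : m y ≤ m c := hm ⟨by linarith, by linarith⟩ ⟨by linarith, by linarith⟩ hyc
  have hcd_m : m c ≤ m d := hm ⟨by linarith, by linarith⟩ ⟨by linarith, hd⟩ hcd.le
  rcases hyc.eq_or_lt with rfl | hyc
  · linarith [hu x y d hx hxy hcd hd]
  · linarith [hu x y c hx hxy hyc (by linarith), hu y c d (by linarith) hyc hcd hd]

theorem mul_sub_le (hu : AlmostConvex u m α β) (hw : AlmostConvex w m α β)
    (hm : MonotoneOn m (Icc α β)) (hh : 0 < h) (ha : α ≤ a) (hab : b - a = h) (hbx : b ≤ x)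
    (hxy : x ≤ y) (hyc : y ≤ c) (hcd : d - c = h) (hd : d ≤ β) :
    h * ((w y - w x) - (u y - u x)) ≤
      ((w d - w c) - (u b - u a) + 4 * h * (m d - m a)) * (y - x) := by
  rcases hxy.eq_or_lt with rfl | hxy
  · simp
  have hyx : y - x ≠ 0 := (sub_pos.2 hxy).ne'
  have h_right := hw.slope_le hm (by linarith : α ≤ x) hxy hyc (by linarith : c < d) hd
  have h_left := hu.slope_le hm ha (by linarith : a < b) hbx hxy (by linarith : y ≤ β)
  have h_max : m a ≤ m x := hm ⟨ha, by linarith⟩ ⟨by linarith, by linarith⟩ (by linarith)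
  have h_myd : m y ≤ m d := hm ⟨by linarith, by linarith⟩ ⟨by linarith, hd⟩ (by linarith)
  rw [hcd] at h_right
  rw [hab] at h_left
  calc h * ((w y - w x) - (u y - u x))
      = h * ((w y - w x) / (y - x) - (u y - u x) / (y - x)) * (y - x) := by field_simp
    _ ≤ h * ((w d - w c) / h - (u b - u a) / h + 4 * (m d - m a)) * (y - x) := by
        gcongr
        linarith
    _ = ((w d - w c) - (u b - u a) + 4 * h * (m d - m a)) * (y - x) := by field_simp

theorem mul_abs_sub_le (hu : AlmostConvex u m α β) (hw : AlmostConvex w m α β)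
    (hm : MonotoneOn m (Icc α β)) (h_close : ∀ x ∈ Icc α β, |w x - u x| ≤ η) (hh : 0 < h)
    (ha : α ≤ a) (hab : b - a = h) (hbx : b ≤ x) (hxy : x ≤ y) (hyc : y ≤ c) (hcd : d - c = h)
    (hd : d ≤ β) :
    h * |(w y - u y) - (w x - u x)| ≤
      ((u d - u c) - (u b - u a) + 2 * η + 4 * h * (m d - m a)) * (y - x) := by
  have h_at := fun t (hat : a ≤ t) (htd : t ≤ d) =>
    abs_le.1 (h_close t ⟨ha.trans hat, htd.trans hd⟩)
  have hyx : 0 ≤ y - x := sub_nonneg.2 hxy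
  have h_up := (hu.mul_sub_le hw hm hh ha hab hbx hxy hyc hcd hd).trans <|
    mul_le_mul_of_nonneg_right (b := w d - w c - (u b - u a) + 4 * h * (m d - m a))
      (c := u d - u c - (u b - u a) + 2 * η + 4 * h * (m d - m a))
      (by linarith [h_at c (by linarith) (by linarith), h_at d (by linarith) le_rfl]) hyx
  have h_down := (hw.mul_sub_le hu hm hh ha hab hbx hxy hyc hcd hd).trans <|
    mul_le_mul_of_nonneg_right (b := u d - u c - (w b - w a) + 4 * h * (m d - m a))
      (c := u d - u c - (u b - u a) + 2 * η + 4 * h * (m d - m a))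
      (by linarith [h_at a le_rfl (by linarith), h_at b (by linarith) (by linarith)]) hyx
  rw [← abs_of_pos hh, ← abs_mul, abs_of_pos hh]
  exact abs_le.2 ⟨by linarith, by linarith⟩

theorem eVariationOn_sub_Icc_le (hu : AlmostConvex u m α β) (hw : AlmostConvex w m α β)
    (hm : MonotoneOn m (Icc α β)) (h_close : ∀ x ∈ Icc α β, |w x - u x| ≤ η) (hh : 0 < h)
    (ha : α ≤ a) (hab : b - a = h) (hbc : c - b = h) (hcd : d - c = h) (hd : d ≤ β) :
    0 ≤ (u d - u c) - (u b - u a) + 2 * η + 4 * h * (m d - m a) ∧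
      eVariationOn (w - u) (Icc b c) ≤
        ENNReal.ofReal ((u d - u c) - (u b - u a) + 2 * η + 4 * h * (m d - m a)) := by
  have h_incr := fun x y (hbx : b ≤ x) (hxy : x ≤ y) (hyc : y ≤ c) =>
    hu.mul_abs_sub_le hw hm h_close hh ha hab hbx hxy hyc hcd hd
  set C := (u d - u c) - (u b - u a) + 2 * η + 4 * h * (m d - m a)
  have hbc' : b ≤ c := by linarith
  constructor
  · have h_full := h_incr b c le_rfl hbc' le_rfl
    rw [hbc] at h_full
    exact nonneg_of_mul_nonneg_left ((mul_nonneg hh.le (abs_nonneg _)).trans h_full) hh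
  · have h_var := eVariationOn_Icc_le_of_dist_le_sub (u := w - u) (B := fun t => C / h * t) hbc'
      fun x y hbx hxy hyc => by
        rw [dist_comm, Real.dist_eq, ← mul_sub, div_mul_eq_mul_div, le_div_iff₀' hh]
        exact h_incr x y hbx hxy hyc
    rwa [← mul_sub, hbc, div_mul_cancel₀ _ hh.ne'] at h_var

theorem eVariationOn_sub_grid_le {t : ℕ → ℝ} (hh : 0 < h) (ht : ∀ k, t (k + 1) - t k = h) (N : ℕ)
    (hu : AlmostConvex u m (t 0) (t (N + 2))) (hw : AlmostConvex w m (t 0) (t (N + 2)))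
    (hm : MonotoneOn m (Icc (t 0) (t (N + 2))))
    (h_close : ∀ x ∈ Icc (t 0) (t (N + 2)), |w x - u x| ≤ η) :
    eVariationOn (w - u) (Icc (t 1) (t (N + 1))) ≤
      ENNReal.ofReal ((u (t (N + 2)) - u (t N)) - (u (t 2) - u (t 0)) + 2 * N * η
        + 12 * h * (m (t (N + 2)) - m (t 0))) := by
  have ht_mono : Monotone t := monotone_nat_of_le_succ fun k => by linarith [ht k]
  have ht_mem : ∀ k ≤ N + 2, t k ∈ Icc (t 0) (t (N + 2)) := fun k hk =>
    ⟨ht_mono k.zero_le, ht_mono hk⟩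
  have hm_mem : ∀ k ≤ N + 2, m (t 0) ≤ m (t k) ∧ m (t k) ≤ m (t (N + 2)) := fun k hk =>
    ⟨hm (ht_mem 0 (by lia)) (ht_mem k hk) (ht_mem k hk).1,
      hm (ht_mem k hk) (ht_mem _ le_rfl) (ht_mem k hk).2⟩
  set g : ℕ → ℝ := fun k => (u (t (k + 2)) - u (t k)) + 2 * k * η
    + 4 * h * (m (t (k + 2)) + m (t (k + 1)) + m (t k)) with hg
  have h_cell : ∀ k < N, 0 ≤ g (k + 1) - g k ∧
      eVariationOn (w - u) (Icc (t (k + 1)) (t (k + 2))) ≤ ENNReal.ofReal (g (k + 1) - g k) :=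
    fun k hk => by
      convert hu.eVariationOn_sub_Icc_le hw hm h_close hh (ht_mem k (by lia)).1 (ht k)
        (ht (k + 1)) (ht (k + 2)) (ht_mem (k + 3) (by lia)).2 using 3 <;>
      · simp only [hg]
        push_cast
        ring
  calc eVariationOn (w - u) (Icc (t 1) (t (N + 1)))
      = ∑ k ∈ Finset.range N, eVariationOn (w - u) (Icc (t (k + 1)) (t (k + 2))) :=
        (eVariationOn.sum' (w - u) fun _ _ hij => ht_mono (Nat.succ_le_succ hij)).symm
    _ ≤ ∑ k ∈ Finset.range N, ENNReal.ofReal (g (k + 1) - g k) :=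
        Finset.sum_le_sum fun k hk => (h_cell k (Finset.mem_range.1 hk)).2
    _ = ENNReal.ofReal (g N - g 0) := by
        rw [← ENNReal.ofReal_sum_of_nonneg fun k hk => (h_cell k (Finset.mem_range.1 hk)).1,
          Finset.sum_range_sub]
    _ ≤ _ := by
        refine ENNReal.ofReal_le_ofReal ?_
        have h_m : 4 * h * ((m (t N) + m (t (N + 1)) + m (t (N + 2))) -
            (m (t 0) + m (t 1) + m (t 2))) ≤ 4 * h * (3 * (m (t (N + 2)) - m (t 0))) := by
          gcongr
          linarith [hm_mem 1 (by lia), hm_mem 2 (by lia), hm_mem N (by lia),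
            hm_mem (N + 1) (by lia)]
        simp only [hg, zero_add, CharP.cast_eq_zero]
        linarith

theorem eVariationOn_sub_le (hαβ : α < β) (hu : AlmostConvex u m α β)
    (hw : AlmostConvex w m α β) (hm : MonotoneOn m (Icc α β))
    (h_close : ∀ x ∈ Icc α β, |w x - u x| ≤ η) (N : ℕ) (hh : h = (β - α) / (N + 2)) :
    eVariationOn (w - u) (Icc (α + h) (β - h)) ≤
      ENNReal.ofReal ((u β - u (β - 2 * h)) - (u (α + 2 * h) - u α) + 2 * N * η
        + 12 * h * (m β - m α)) := by
  have h_pos : 0 < h := hh ▸ div_pos (sub_pos.2 hαβ) (by positivity)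
  have h_len : (N + 2) * h = β - α := by rw [hh]; field_simp
  let t : ℕ → ℝ := fun k => α + k * h
  have ht : ∀ k, t (k + 1) - t k = h := fun k => by simp only [t]; push_cast; ring
  have ht_zero : t 0 = α := by simp only [t, CharP.cast_eq_zero, zero_mul, add_zero]
  have ht_end : t (N + 2) = β := by simp only [t]; push_cast; linarith
  have ht_one : t 1 = α + h := by linarith [ht 0]
  have ht_two : t 2 = α + 2 * h := by linarith [ht 1]
  have ht_pred : t (N + 1) = β - h := by linarith [ht (N + 1)]
  have ht_N : t N = β - 2 * h := by linarith [ht N]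
  have h_grid := eVariationOn_sub_grid_le (u := u) (w := w) (m := m) (η := η) h_pos ht N
  rw [ht_zero, ht_end, ht_one, ht_two, ht_pred, ht_N] at h_grid
  exact h_grid hu hw hm h_close

end AlmostConvex

theorem weighted_average_le {a b c l₁ l₂ r κ M D : ℝ} (h₁ : 0 < l₁) (h₂ : 0 < l₂) (hκ : 0 < κ)
    (hr : κ ≤ r) (hab : b - a ≤ D) (hD : 0 ≤ D) (hbc : b - c ≤ M) (hM : 0 ≤ M) :
    (l₁ + l₂) * ((b * l₂ + c * r) / (l₂ + r)) ≤
      l₂ * ((a * l₁ + b * l₂ + c * r) / (l₁ + l₂ + r)) + l₁ * c +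
        l₁ * l₂ * (D / κ + M * (l₁ + l₂) / κ ^ 2) := by
  have hr0 : 0 < r := hκ.trans_le hr
  have h_error : (l₁ + l₂) * ((b * l₂ + c * r) / (l₂ + r)) -
      (l₂ * ((a * l₁ + b * l₂ + c * r) / (l₁ + l₂ + r)) + l₁ * c) =
      l₁ * l₂ * ((b - a) / (l₁ + l₂ + r) +
        (b - c) * (l₁ + l₂) / ((l₂ + r) * (l₁ + l₂ + r))) := by
    field_simp
    ring
  have h_ab : (b - a) / (l₁ + l₂ + r) ≤ D / κ := div_le_div₀ hD hab hκ (by linarith)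
  have h_bc : (b - c) * (l₁ + l₂) / ((l₂ + r) * (l₁ + l₂ + r)) ≤ M * (l₁ + l₂) / κ ^ 2 := by
    refine div_le_div₀ (by positivity) (by gcongr) (by positivity) ?_
    rw [sq]
    gcongr <;> linarith
  linarith [mul_le_mul_of_nonneg_left (add_le_add h_ab h_bc) (mul_pos h₁ h₂).le]

namespace FiniteMax

variable {w : ℝ → ℝ} {x y z : ℝ}

theorem mAvg_le_mAvg_add (hw : FiniteMax w) {a b c d D : ℝ} (hab : a < b) (hcd : c < d)
    (h : ∀ s ∈ Icc a b, ∀ t ∈ Icc c d, |w t| ≤ |w s| + D) : mAvg w c d ≤ mAvg w a b + D :=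
  mAvg_le hcd fun t ht => by
    have h_le : |w t| - D ≤ mAvg w a b := (le_div_iff₀ (sub_pos.2 hab)).2 <|
      hw.le_integral_abs hab.le fun s hs => by
        linarith [h s (Ioo_subset_Icc_self hs) t (Ioc_subset_Icc_self ht)]
    linarith

theorem mul_mAvg_right_le (hw : FiniteMax w) {t κ M D : ℝ} (hκ : 0 < κ) (hxy : x < y)
    (hyz : y < z) (hzt : z + κ ≤ t) (hM : ∀ τ ∈ Icc x z, |w τ| ≤ M)
    (hD : ∀ σ ∈ Icc x z, ∀ τ ∈ Icc x z, |w τ| ≤ |w σ| + D) :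
    (z - x) * mAvg w y t ≤ (z - y) * uMax w x + (y - x) * uMax w z +
      (y - x) * (z - y) * (D / κ + M * (z - x) / κ ^ 2) := by
  have hy_mem : y ∈ Icc x z := ⟨hxy.le, hyz.le⟩
  have h_osc : mAvg w y z ≤ mAvg w x y + D := hw.mAvg_le_mAvg_add hxy hyz fun σ hσ τ hτ =>
    hD σ ⟨hσ.1, hσ.2.trans hyz.le⟩ τ ⟨hxy.le.trans hτ.1, hτ.2⟩
  have h_bound : mAvg w y z ≤ M := mAvg_le hyz fun τ hτ => hM τ ⟨hxy.le.trans hτ.1.le, hτ.2⟩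
  have h_far : 0 ≤ mAvg w z t := mAvg_nonneg (by linarith)
  have h_weighted := weighted_average_le (M := M) (sub_pos.2 hxy) (sub_pos.2 hyz) hκ
    (le_sub_iff_add_le'.2 hzt) (sub_le_iff_le_add'.2 h_osc) (by linarith [hD y hy_mem y hy_mem])
    (by linarith : mAvg w y z - mAvg w z t ≤ M) ((abs_nonneg _).trans (hM y hy_mem))
  have h_int : ∀ {a b : ℝ}, a < b → mAvg w a b * (b - a) = ∫ τ in a..b, |w τ| := fun hab =>
    div_mul_cancel₀ _ (sub_pos.2 hab).ne'
  rw [h_int hxy, h_int hyz, h_int (by linarith), hw.integral_abs_add, hw.integral_abs_add,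
    hw.integral_abs_add, sub_add_sub_cancel', sub_add_sub_cancel', sub_add_sub_cancel']
    at h_weighted
  have h_x := mul_le_mul_of_nonneg_left
    (hw.mAvg_le_uMax (by linarith : x < t) le_rfl (by linarith)) (sub_nonneg.2 hyz.le)
  have h_z := mul_le_mul_of_nonneg_left
    (hw.mAvg_le_uMax (by linarith : z < t) le_rfl (by linarith)) (sub_nonneg.2 hxy.le)
  unfold mAvg at h_x h_z h_weighted ⊢
  linarith

theorem mul_mAvg_left_le (hw : FiniteMax w) {s κ M D : ℝ} (hκ : 0 < κ) (hxy : x < y)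
    (hyz : y < z) (hsx : s ≤ x - κ) (hM : ∀ τ ∈ Icc x z, |w τ| ≤ M)
    (hD : ∀ σ ∈ Icc x z, ∀ τ ∈ Icc x z, |w τ| ≤ |w σ| + D) :
    (z - x) * mAvg w s y ≤ (z - y) * uMax w x + (y - x) * uMax w z +
      (y - x) * (z - y) * (D / κ + M * (z - x) / κ ^ 2) := by
  have h_neg : ∀ τ ∈ Icc (-z) (-x), -τ ∈ Icc x z := fun τ hτ => neg_mem_Icc_iff.2 hτ
  have h_refl := hw.comp_neg.mul_mAvg_right_le (t := -s) hκ (neg_lt_neg hyz) (neg_lt_neg hxy)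
    (by linarith) (fun τ hτ => hM _ (h_neg τ hτ))
    fun σ hσ τ hτ => hD _ (h_neg σ hσ) _ (h_neg τ hτ)
  simp only [mAvg_comp_neg, uMax_comp_neg, neg_neg, neg_sub_neg] at h_refl
  linarith

/- An average over an interval leaving `[α, β]` by at least `κ` loses little when the interval is
extended to `x`, or shortened to `z`. -/
theorem almostConvex_uMax (hw : FiniteMax w) {V : ℝ → ℝ} {M α β κ : ℝ} (hκ : 0 < κ)
    (hM : ∀ x ∈ Icc α β, |w x| ≤ M)
    (hV : ∀ x y, α ≤ x → x ≤ y → y ≤ β → |w y - w x| ≤ V y - V x)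
    (h_far : ∀ y ∈ Icc α β, ∀ K < uMax w y,
      (∃ t, β + κ ≤ t ∧ K < mAvg w y t) ∨ ∃ s, s ≤ α - κ ∧ K < mAvg w s y) :
    AlmostConvex (uMax w) (fun x => V x / κ + M * x / κ ^ 2) α β := by
  refine almostConvex_of_mul_le fun x y z hx hxy hyz hz => ?_
  have hM' : ∀ τ ∈ Icc x z, |w τ| ≤ M := fun τ hτ => hM τ ⟨hx.trans hτ.1, hτ.2.trans hz⟩
  have hV_nonneg : ∀ {σ τ}, x ≤ σ → σ ≤ τ → τ ≤ z → 0 ≤ V τ - V σ := fun hσ hστ hτ =>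
    (abs_nonneg _).trans (hV _ _ (hx.trans hσ) hστ (hτ.trans hz))
  have h_osc : ∀ σ ∈ Icc x z, ∀ τ ∈ Icc x z, |w τ| ≤ |w σ| + (V z - V x) := fun σ hσ τ hτ => by
    rw [← sub_le_iff_le_add']
    refine (abs_sub_abs_le_abs_sub _ _).trans ?_
    rcases le_total σ τ with hστ | hτσ
    · linarith [hV σ τ (hx.trans hσ.1) hστ (hτ.2.trans hz), hV_nonneg le_rfl hσ.1 hσ.2,
        hV_nonneg hτ.1 hτ.2 le_rfl]
    · rw [abs_sub_comm]
      linarith [hV τ σ (hx.trans hτ.1) hτσ (hσ.2.trans hz), hV_nonneg le_rfl hτ.1 hτ.2,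
        hV_nonneg hσ.1 hσ.2 le_rfl]
  have hzx : 0 < z - x := by linarith
  rw [show V z / κ + M * z / κ ^ 2 - (V x / κ + M * x / κ ^ 2) =
    (V z - V x) / κ + M * (z - x) / κ ^ 2 by ring, mul_comm (z - x), ← le_div_iff₀ hzx]
  refine le_of_forall_lt_imp_le_of_dense fun K hK => ?_
  rw [le_div_iff₀' hzx]
  rcases h_far y ⟨hx.trans hxy.le, hyz.le.trans hz⟩ K hK with ⟨t, ht, hKt⟩ | ⟨s, hs, hKs⟩
  · exact (mul_le_mul_of_nonneg_left hKt.le hzx.le).trans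
      (hw.mul_mAvg_right_le hκ hxy hyz (by linarith) hM' h_osc)
  · exact (mul_le_mul_of_nonneg_left hKs.le hzx.le).trans
      (hw.mul_mAvg_left_le hκ hxy hyz (by linarith) hM' h_osc)

end FiniteMax

/-! ### Points where the maximal function is not attained locally -/

/-- The points near which `|f|` comes arbitrarily close to the value of the maximal function. -/
def contactSet (f : ℝ → ℝ) : Set ℝ :=
  {x | ∀ δ > 0, ∃ t, |t - x| < δ ∧ uMax f x - δ < |f t|}

theorem isClosed_contactSet {f : ℝ → ℝ} (hf : Continuous (uMax f)) : IsClosed (contactSet f) := by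
  refine isClosed_of_closure_subset fun x hx δ hδ => ?_
  have h_near : ∀ᶠ y in 𝓝 x, |y - x| < δ / 2 ∧ |uMax f y - uMax f x| < δ / 2 :=
    (eventually_abs_sub_lt x (half_pos hδ)).and
      ((hf.tendsto x).eventually (eventually_abs_sub_lt _ (half_pos hδ)))
  obtain ⟨y, hy, hyx, huy⟩ := ((mem_closure_iff_frequently.1 hx).and_eventually h_near).exists
  obtain ⟨t, hty, ht⟩ := hy (δ / 2) (half_pos hδ)
  exact ⟨t, by linarith [abs_sub_le t y x], by linarith [(abs_lt.1 huy).1]⟩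

theorem FiniteMax.almostConvex_uMax_of_gap {w V : ℝ → ℝ} (hw : FiniteMax w) {A α β κ : ℝ}
    (hκ : 0 < κ) (hA : ∀ t ∈ Ioo (α - κ) (β + κ), |w t| ≤ A)
    (hV : ∀ x y, α ≤ x → x ≤ y → y ≤ β → |w y - w x| ≤ V y - V x)
    (h_gap : ∀ y ∈ Icc α β, A < uMax w y) :
    AlmostConvex (uMax w) (fun x => V x / κ + A * x / κ ^ 2) α β := by
  refine hw.almostConvex_uMax hκ (fun t ht => hA t ⟨by linarith [ht.1], by linarith [ht.2]⟩) hV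
    fun y hy K hK => ?_
  rcases hw.exists_lt_mAvg_oneSided (max_lt hK (h_gap y hy)) with ⟨t, hyt, ht⟩ | ⟨s, hsy, hs⟩
  · refine Or.inl ⟨t, ?_, (le_max_left _ _).trans_lt ht⟩
    by_contra! h_near
    refine ((le_max_right K A).trans_lt ht).not_ge (mAvg_le hyt fun r hr => hA r ?_)
    exact ⟨by linarith [hy.1, hr.1], by linarith [hr.2]⟩
  · refine Or.inr ⟨s, ?_, (le_max_left _ _).trans_lt hs⟩
    by_contra! h_near
    refine ((le_max_right K A).trans_lt hs).not_ge (mAvg_le hsy fun r hr => hA r ?_)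
    exact ⟨by linarith [hr.1], by linarith [hy.2, hr.2]⟩

theorem asympVarLE_sub_zero_of_almostConvex {u : ℝ → ℝ} {w : ℕ → ℝ → ℝ} {e : ℕ → ℝ}
    {α β p q B : ℝ} (hαp : α < p) (hpq : p ≤ q) (hqβ : q < β) (hu : Continuous u)
    (he : Tendsto e atTop (𝓝 0)) (h_close : ∀ j, ∀ x ∈ Icc α β, |w j x - u x| ≤ e j)
    (h_convex : ∀ᶠ j in atTop, ∃ m, MonotoneOn m (Icc α β) ∧ m β - m α ≤ B ∧
      AlmostConvex u m α β ∧ AlmostConvex (w j) m α β) :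
    AsympVarLE (fun j => w j - u) (Icc p q) 0 := fun ε hε => by
  let G : ℝ → ℝ := fun h => (u β - u (β - 2 * h)) - (u (α + 2 * h) - u α) + 12 * h * B
  have hG : Tendsto G (𝓝 0) (𝓝 0) := by
    have hG_cont : Continuous G := by fun_prop
    simpa only [G, mul_zero, zero_mul, sub_zero, add_zero, sub_self] using hG_cont.tendsto 0
  have h_step : Tendsto (fun N : ℕ => (β - α) / ((N : ℝ) + 2)) atTop (𝓝 0) :=
    tendsto_const_nhds.div_atTop (tendsto_atTop_add_const_right _ _ tendsto_natCast_atTop_atTop)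
  obtain ⟨N, ⟨hGN, hNp⟩, hNq⟩ :=
    ((((hG.comp h_step).eventually_lt_const (half_pos hε)).and
      (h_step.eventually_lt_const (sub_pos.2 hαp))).and
        (h_step.eventually_lt_const (sub_pos.2 hqβ))).exists
  have he_small : ∀ᶠ j in atTop, 2 * N * e j < ε / 2 :=
    (by simpa only [mul_zero] using he.const_mul (2 * (N : ℝ)) :
      Tendsto (fun j => 2 * N * e j) atTop (𝓝 0)).eventually_lt_const (half_pos hε)
  filter_upwards [h_convex, he_small] with j ⟨m, hm, hmB, hu_convex, hw_convex⟩ hj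
  have hαβ : α < β := hαp.trans_le (hpq.trans hqβ.le)
  rw [zero_add]
  refine (eVariationOn.mono _ (Icc_subset_Icc (by linarith) (by linarith))).trans <|
    (hu_convex.eVariationOn_sub_le hαβ hw_convex hm (h_close j) N rfl).trans
      (ENNReal.ofReal_le_ofReal ?_)
  have hN : 0 ≤ 12 * ((β - α) / ((N : ℝ) + 2)) := by
    have := sub_nonneg.2 hαβ.le
    positivity
  simp only [G, Function.comp_apply] at hGN
  linarith [mul_le_mul_of_nonneg_left hmB hN]

theorem AsympVarLE.Icc_zero_of_forall_nhds {E : Type*} [PseudoEMetricSpace E] {D : ℕ → ℝ → E}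
    {a b : ℝ} (h : ∀ x ∈ Icc a b, ∃ ρ > 0, AsympVarLE D (Icc (x - ρ) (x + ρ)) 0) :
    AsympVarLE D (Icc a b) 0 := by
  rcases lt_or_ge b a with hba | hab
  · exact .of_eventually (.of_forall fun j => by
      rw [Icc_eq_empty hba.not_ge, eVariationOn.subsingleton _ subsingleton_empty])
  choose! ρ hρ hD using h
  obtain ⟨t, ht_zero, ht_mono, ⟨n, ht_n⟩, ht_ball⟩ :=
    exists_monotone_Icc_subset_open_cover_Icc hab
      (c := fun x : Icc a b => Subtype.val ⁻¹' Metric.ball (x : ℝ) (ρ x))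
      (fun x => Metric.isOpen_ball.preimage continuous_subtype_val)
      fun x _ => mem_iUnion.2 ⟨x, Metric.mem_ball_self (hρ x x.2)⟩
  have h_cell : ∀ k, AsympVarLE D (Icc (t k : ℝ) (t (k + 1))) 0 := fun k => by
    obtain ⟨x, hx⟩ := ht_ball k
    refine (hD x x.2).mono (fun s hs => ?_) le_rfl
    rw [← Real.closedBall_eq_Icc]
    exact Metric.ball_subset_closedBall (hx (a := ⟨s, (t k).2.1.trans hs.1,
      hs.2.trans (t (k + 1)).2.2⟩) hs)
  have h_init : ∀ k, AsympVarLE D (Icc (t 0 : ℝ) (t k)) 0 := fun k => by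
    induction k with
    | zero =>
      exact .of_eventually (.of_forall fun j =>
        (eVariationOn.subsingleton _ (Icc_self (t 0 : ℝ) ▸ subsingleton_singleton)).le)
    | succ k ih =>
      simpa only [add_zero] using
        ih.Icc_union (Subtype.coe_le_coe.2 (ht_mono k.zero_le))
          (Subtype.coe_le_coe.2 (ht_mono k.le_succ)) (h_cell k)
  simpa only [ht_zero, ht_n n le_rfl] using h_init n

namespace BVApprox

variable {f : ℝ → ℝ} {F : ℕ → ℝ → ℝ} {e : ℕ → ℝ}

theorem exists_uniform_gap (H : BVApprox f F e) {x : ℝ} (hx : x ∉ contactSet f) :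
    ∃ A, ∃ ρ > 0, ∃ κ > 0, ∀ᶠ j in atTop,
      (∀ t ∈ Ioo (x - ρ - κ) (x + ρ + κ), |f t| ≤ A ∧ |F j t| ≤ A) ∧
        ∀ y ∈ Icc (x - ρ) (x + ρ), A < uMax f y ∧ A < uMax (F j) y := by
  simp only [contactSet, mem_ofPred_eq, not_forall, not_exists, not_and, not_lt] at hx
  obtain ⟨δ, hδ, hf_le⟩ := hx
  have h_near : ∀ᶠ ρ in 𝓝[>] 0,
      Metric.closedBall x ρ ⊆ {y | |uMax f y - uMax f x| < δ / 4} :=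
    nhdsWithin_le_nhds (eventually_closedBall_subset
      ((H.continuous_uMax.tendsto x).eventually (Metric.ball_mem_nhds _ (by linarith))))
  obtain ⟨ρ, h_near, hρ, hρδ⟩ := (h_near.and (Ioo_mem_nhdsGT (half_pos hδ))).exists
  rw [Real.closedBall_eq_Icc] at h_near
  refine ⟨uMax f x - δ / 2, ρ, hρ, δ / 2, half_pos hδ, ?_⟩
  filter_upwards [H.eventually_le (show 0 < δ / 8 by linarith)] with j hj
  refine ⟨fun t ht => ?_, fun y hy => ?_⟩
  · have hft := hf_le t (abs_lt.2 ⟨by linarith [ht.1], by linarith [ht.2]⟩)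
    exact ⟨by linarith, by linarith [H.abs_sub_le j t, abs_sub_abs_le_abs_sub (F j t) (f t)]⟩
  · have h_y : |uMax f y - uMax f x| < δ / 4 := h_near hy
    have h_close := (abs_le.1 (H.abs_maxDiff_le j y)).1
    simp only [maxDiff, Pi.sub_apply] at h_close
    exact ⟨by linarith [(abs_lt.1 h_y).1], by linarith [(abs_lt.1 h_y).1]⟩

theorem exists_almostConvex (H : BVApprox f F e) {x : ℝ} (hx : x ∉ contactSet f) :
    ∃ ρ > 0, ∃ B, ∀ᶠ j in atTop, ∃ m, MonotoneOn m (Icc (x - ρ) (x + ρ)) ∧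
      m (x + ρ) - m (x - ρ) ≤ B ∧ AlmostConvex (uMax f) m (x - ρ) (x + ρ) ∧
        AlmostConvex (uMax (F j)) m (x - ρ) (x + ρ) := by
  obtain ⟨A, ρ, hρ, κ, hκ, h_gap⟩ := H.exists_uniform_gap hx
  obtain ⟨V, hV⟩ := exists_isCumulativeVariation H.bv.locallyBoundedVariationOn
  refine ⟨ρ, hρ, (2 * (eVariationOn f univ).toReal + 1) / κ + A * (2 * ρ) / κ ^ 2, ?_⟩
  filter_upwards [h_gap, H.eventually_le one_pos] with j ⟨h_le, h_lt⟩ hj_one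
  obtain ⟨W, hW⟩ := exists_isCumulativeVariation (H.bv_seq j).locallyBoundedVariationOn
  have hA : 0 ≤ A := (abs_nonneg _).trans (h_le x ⟨by linarith, by linarith⟩).1
  have hW_total : (eVariationOn (F j) univ).toReal ≤ (eVariationOn f univ).toReal + 1 := by
    rw [← ENNReal.toReal_one, ← ENNReal.toReal_add H.bv ENNReal.one_ne_top]
    refine ENNReal.toReal_mono (ENNReal.add_ne_top.2 ⟨H.bv, ENNReal.one_ne_top⟩)
      ((H.eVariationOn_seq_le j univ).trans ?_)
    gcongr
    exact ENNReal.ofReal_le_one.2 hj_one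
  have hVW : ∀ s t, s ≤ t → 0 ≤ V t - V s ∧ 0 ≤ W t - W s := fun s t hst =>
    ⟨sub_nonneg.2 (hV.monotone hst), sub_nonneg.2 (hW.monotone hst)⟩
  refine ⟨fun t => (V t + W t) / κ + A * t / κ ^ 2, fun s _ t _ hst => ?_, ?_,
    H.bv.finiteMax.almostConvex_uMax_of_gap hκ (fun t ht => (h_le t ht).1)
      (fun s t _ hst _ => by linarith [hV.abs_sub_le hst, (hVW s t hst).2])
      fun y hy => (h_lt y hy).1,
    (H.bv_seq j).finiteMax.almostConvex_uMax_of_gap hκ (fun t ht => (h_le t ht).2)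
      (fun s t _ hst _ => by linarith [hW.abs_sub_le hst, (hVW s t hst).1])
      fun y hy => (h_lt y hy).2⟩
  · have h_incr := hVW s t hst
    dsimp only
    gcongr ?_ / _ + A * ?_ / _
    linarith
  · have hρρ : x - ρ ≤ x + ρ := by linarith
    have h_incr : (V (x + ρ) - V (x - ρ)) + (W (x + ρ) - W (x - ρ)) ≤
        2 * (eVariationOn f univ).toReal + 1 := by
      linarith [hV.sub_le_toReal_eVariationOn H.bv hρρ,
        hW.sub_le_toReal_eVariationOn (H.bv_seq j) hρρ]
    calc _ = ((V (x + ρ) - V (x - ρ)) + (W (x + ρ) - W (x - ρ))) / κ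
          + A * (2 * ρ) / κ ^ 2 := by ring
      _ ≤ _ := by gcongr

theorem exists_asympVarLE_zero_nhds (H : BVApprox f F e) {x : ℝ} (hx : x ∉ contactSet f) :
    ∃ ρ > 0, AsympVarLE (maxDiff f F) (Icc (x - ρ) (x + ρ)) 0 := by
  obtain ⟨ρ, hρ, B, h_convex⟩ := H.exists_almostConvex hx
  exact ⟨ρ / 2, half_pos hρ, asympVarLE_sub_zero_of_almostConvex (by linarith) (by linarith)
    (by linarith) H.continuous_uMax H.tendsto (fun j y _ => H.abs_maxDiff_le j y) h_convex⟩

theorem asympVarLE_Icc_zero (H : BVApprox f F e) {a b : ℝ}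
    (h : ∀ x ∈ Icc a b, x ∉ contactSet f) : AsympVarLE (maxDiff f F) (Icc a b) 0 :=
  AsympVarLE.Icc_zero_of_forall_nhds fun x hx => H.exists_asympVarLE_zero_nhds (h x hx)

end BVApprox

/-! ### Local control by the variation of the limit -/

theorem ofReal_uMax_sub_abs_le_of_mem_contactSet {f : ℝ → ℝ} {a b p : ℝ} (hp : p ∈ contactSet f)
    (hap : a < p) (hpb : p < b) :
    ENNReal.ofReal (uMax f p - |f p|) ≤ eVariationOn f (Icc a b) := by
  refine ENNReal.le_of_forall_pos_le_add fun ε hε _ => ?_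
  obtain ⟨t, ht, hft⟩ := hp (min ε (min (p - a) (b - p)))
    (lt_min hε (lt_min (sub_pos.2 hap) (sub_pos.2 hpb)))
  simp only [lt_min_iff, abs_lt] at ht
  have h_edist : edist (f t) (f p) ≤ eVariationOn f (Icc a b) :=
    eVariationOn.edist_le f ⟨by linarith, by linarith⟩ ⟨hap.le, hpb.le⟩
  calc ENNReal.ofReal (uMax f p - |f p|) ≤ ENNReal.ofReal (dist (f t) (f p) + ε) := by
        refine ENNReal.ofReal_le_ofReal ?_
        rw [Real.dist_eq]
        linarith [abs_sub_abs_le_abs_sub (f t) (f p), min_le_left (ε : ℝ) (min (p - a) (b - p))]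
    _ = edist (f t) (f p) + ε := by
        rw [ENNReal.ofReal_add dist_nonneg ε.coe_nonneg, ← edist_dist, ENNReal.ofReal_coe_nnreal]
    _ ≤ _ := by gcongr

namespace BVApprox

variable {f : ℝ → ℝ} {F : ℕ → ℝ → ℝ} {e : ℕ → ℝ}

theorem asympVarLE_Icc_zero_left (H : BVApprox f F e) {a p : ℝ}
    (h : ∀ x, a ≤ x → x < p → x ∉ contactSet f) : AsympVarLE (maxDiff f F) (Icc a p) 0 := by
  refine .of_forall_pos fun ε hε => ?_
  obtain ⟨η, hη, hp⟩ := H.exists_asympVarLE_nhds p hε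
  rcases le_total a (p - η) with haη | hηa
  · exact (H.asympVarLE_Icc_zero fun x hx => h x hx.1 (by linarith [hx.2])).Icc_union haη
      (by linarith) (hp.mono (Icc_subset_Icc le_rfl (by linarith)) le_rfl)
  · rw [zero_add]
    exact hp.mono (Icc_subset_Icc hηa (by linarith)) le_rfl

theorem asympVarLE_Icc_zero_right (H : BVApprox f F e) {q b : ℝ}
    (h : ∀ x, q < x → x ≤ b → x ∉ contactSet f) : AsympVarLE (maxDiff f F) (Icc q b) 0 := by
  refine .of_forall_pos fun ε hε => ?_
  obtain ⟨η, hη, hq⟩ := H.exists_asympVarLE_nhds q hε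
  rcases le_total (q + η) b with hηb | hbη
  · rw [add_comm]
    exact (hq.mono (Icc_subset_Icc (by linarith) le_rfl) le_rfl).Icc_union (by linarith) hηb
      (H.asympVarLE_Icc_zero fun x hx => h x (by linarith [hx.1]) hx.2)
  · rw [zero_add]
    exact hq.mono (Icc_subset_Icc (by linarith) hbη) le_rfl

theorem ofReal_uMax_seq_sub_abs_le (H : BVApprox f F e) (j : ℕ) (x : ℝ) :
    ENNReal.ofReal (uMax (F j) x - |F j x|) ≤
      ENNReal.ofReal (uMax f x - |f x|) + 2 * ENNReal.ofReal (e j) := by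
  have h_uMax := (abs_le.1 (H.abs_maxDiff_le j x)).2
  simp only [maxDiff, Pi.sub_apply] at h_uMax
  calc ENNReal.ofReal (uMax (F j) x - |F j x|)
      ≤ ENNReal.ofReal (uMax f x - |f x| + 2 * e j) := by
        gcongr
        linarith [H.abs_sub_le j x, abs_sub_comm (f x) (F j x),
          abs_sub_abs_le_abs_sub (f x) (F j x)]
    _ ≤ ENNReal.ofReal (uMax f x - |f x|) + ENNReal.ofReal (2 * e j) := ENNReal.ofReal_add_le
    _ = _ := by rw [ENNReal.ofReal_mul zero_le_two, ENNReal.ofReal_ofNat]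

theorem asympVarLE_Icc_of_mem_contactSet (H : BVApprox f F e) {a b p q : ℝ}
    (hap : a < p) (hpq : p ≤ q) (hqb : q < b) (hp : p ∈ contactSet f) (hq : q ∈ contactSet f) :
    AsympVarLE (maxDiff f F) (Icc p q) (8 * eVariationOn f (Icc a b)) := by
  intro ε hε
  filter_upwards [H.eventually_le (by linarith : 0 < ε / 6)] with j hj
  set T := eVariationOn f (Icc a b)
  have h_sub : Icc p q ⊆ Icc a b := Icc_subset_Icc hap.le hqb.le
  have h_gap : ∀ r ∈ ({p, q} : Set ℝ), ENNReal.ofReal (uMax f r - |f r|) ≤ T := by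
    rintro r (rfl | rfl)
    · exact ofReal_uMax_sub_abs_le_of_mem_contactSet hp hap (hpq.trans_lt hqb)
    · exact ofReal_uMax_sub_abs_le_of_mem_contactSet hq (hap.trans_le hpq) hqb
  have h_gap_seq : ∀ r ∈ ({p, q} : Set ℝ),
      ENNReal.ofReal (uMax (F j) r - |F j r|) ≤ T + 2 * ENNReal.ofReal (e j) := fun r hr =>
    (H.ofReal_uMax_seq_sub_abs_le j r).trans (add_le_add_left (h_gap r hr) _)
  have h_f : eVariationOn (uMax f) (Icc p q) ≤ 2 * T + T + T := by
    refine (H.bv.finiteMax.eVariationOn_uMax_le hpq (h := fun x => |f x|) (fun _ _ => le_rfl)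
      fun x _ => H.abs_le_uMax x).trans ?_
    gcongr
    exacts [(eVariationOn_abs_le _ _).trans (eVariationOn.mono _ h_sub), h_gap p (by simp),
      h_gap q (by simp)]
  have h_F : eVariationOn (uMax (F j)) (Icc p q) ≤ 2 * (T + ENNReal.ofReal (e j)) +
      (T + 2 * ENNReal.ofReal (e j)) + (T + 2 * ENNReal.ofReal (e j)) := by
    refine ((H.bv_seq j).finiteMax.eVariationOn_uMax_le hpq (h := fun x => |F j x|)
      (fun _ _ => le_rfl) fun x _ => H.abs_seq_le_uMax j x).trans ?_
    gcongr
    exacts [(eVariationOn_abs_le _ _).trans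
      ((eVariationOn.mono _ h_sub).trans (H.eVariationOn_seq_le j _)), h_gap_seq p (by simp),
      h_gap_seq q (by simp)]
  calc eVariationOn (maxDiff f F j) (Icc p q)
      ≤ eVariationOn (uMax (F j)) (Icc p q) + eVariationOn (uMax f) (Icc p q) :=
        _root_.eVariationOn_sub_le _ _ _
    _ ≤ _ := add_le_add h_F h_f
    _ = 8 * T + 6 * ENNReal.ofReal (e j) := by ring
    _ ≤ 8 * T + 6 * ENNReal.ofReal (ε / 6) := by gcongr
    _ = 8 * T + ENNReal.ofReal ε := by
        rw [← ENNReal.ofReal_ofNat 6, ← ENNReal.ofReal_mul (by norm_num),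
          mul_div_cancel₀ _ (by norm_num)]

theorem asympVarLE_Icc (H : BVApprox f F e) {a' a b b' : ℝ} (ha : a' < a) (hb : b < b') :
    AsympVarLE (maxDiff f F) (Icc a b) (8 * eVariationOn f (Icc a' b')) := by
  have h_compact : IsCompact (contactSet f ∩ Icc a b) :=
    isCompact_Icc.inter_left (isClosed_contactSet H.continuous_uMax)
  rcases (contactSet f ∩ Icc a b).eq_empty_or_nonempty with h_empty | h_nonempty
  · exact (H.asympVarLE_Icc_zero fun x hx hxc =>
      notMem_empty x (h_empty ▸ ⟨hxc, hx⟩)).mono subset_rfl zero_le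
  obtain ⟨p, ⟨hpc, hap, hpb⟩, hp_least⟩ := h_compact.exists_isLeast h_nonempty
  obtain ⟨q, ⟨hqc, haq, hqb⟩, hq_greatest⟩ := h_compact.exists_isGreatest h_nonempty
  have hpq : p ≤ q := hp_least ⟨hqc, haq, hqb⟩
  have h_left := H.asympVarLE_Icc_zero_left (a := a) (p := p) fun x hax hxp hxc =>
    hxp.not_ge (hp_least ⟨hxc, hax, hxp.le.trans hpb⟩)
  have h_mid := H.asympVarLE_Icc_of_mem_contactSet (ha.trans_le hap) hpq (hqb.trans_lt hb) hpc hqc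
  have h_right := H.asympVarLE_Icc_zero_right (q := q) (b := b) fun x hqx hxb hxc =>
    hqx.not_ge (hq_greatest ⟨hxc, haq.trans hqx.le, hxb⟩)
  simpa only [zero_add, add_zero] using
    (h_left.Icc_union hap hpq h_mid).Icc_union (hap.trans hpq) hqb h_right

end BVApprox

/-! ### The image of the contact set under the cumulative variation -/

theorem eVariationOn_Icc_le_integral_abs_deriv {φ : ℝ → ℝ} {p q : ℝ} (hpq : p ≤ q)
    (hφ : AbsolutelyContinuousOnInterval φ p q) :
    eVariationOn φ (Icc p q) ≤ ENNReal.ofReal (∫ s in p..q, |deriv φ s|) := by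
  have h_int : ∀ {x y}, p ≤ x → x ≤ y → y ≤ q →
      IntervalIntegrable (fun s => |deriv φ s|) volume x y := fun hx hxy hy =>
    (hφ.intervalIntegrable_deriv.mono_set
      (by rw [uIcc_of_le hxy, uIcc_of_le hpq]; exact Icc_subset_Icc hx hy)).abs
  have h_le := eVariationOn_Icc_le_of_dist_le_sub (u := φ) (B := fun y => ∫ s in p..y, |deriv φ s|)
    hpq fun x y hx hxy hy => by
      have hφ_xy : AbsolutelyContinuousOnInterval φ x y :=
        hφ.mono (by rw [uIcc_of_le hxy, uIcc_of_le hpq]; exact Icc_subset_Icc hx hy)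
      rw [dist_comm, Real.dist_eq, ← hφ_xy.integral_deriv_eq_sub,
        intervalIntegral.integral_interval_sub_left (h_int le_rfl (hx.trans hxy) hy)
          (h_int le_rfl hx (hxy.trans hy))]
      exact intervalIntegral.abs_integral_le_integral_abs hxy
  simpa only [intervalIntegral.integral_same, sub_zero] using h_le

theorem ae_abs_deriv_eq_of_le_eVariationOn {φ : ℝ → ℝ} {K : NNReal} (hφ : LipschitzWith K φ)
    {p q : ℝ} (hpq : p ≤ q) (h_var : ENNReal.ofReal (K * (q - p)) ≤ eVariationOn φ (Icc p q)) :
    ∀ᵐ s, s ∈ Ioc p q → |deriv φ s| = K := by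
  have hφ_ac : AbsolutelyContinuousOnInterval φ p q :=
    (hφ.lipschitzOnWith (s := uIcc p q)).absolutelyContinuousOnInterval
  have h_le : ∀ s, |deriv φ s| ≤ K := fun s => norm_deriv_le_of_lipschitz hφ
  have h_ge : K * (q - p) ≤ ∫ s in p..q, |deriv φ s| :=
    (ENNReal.ofReal_le_ofReal_iff
      (intervalIntegral.integral_nonneg hpq fun _ _ => abs_nonneg _)).1
        (h_var.trans (eVariationOn_Icc_le_integral_abs_deriv hpq hφ_ac))
  have h_int : IntegrableOn (fun s => |deriv φ s|) (Ioc p q) :=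
    (intervalIntegrable_iff_integrableOn_Ioc_of_le hpq).1 hφ_ac.intervalIntegrable_deriv.abs
  have h_const : IntegrableOn (fun _ => (K : ℝ)) (Ioc p q) :=
    (intervalIntegrable_iff_integrableOn_Ioc_of_le hpq).1 intervalIntegrable_const
  refine (ae_restrict_iff' measurableSet_Ioc).1 <|
    (integral_eq_iff_of_ae_le h_int h_const (.of_forall h_le)).1 <|
      le_antisymm (integral_mono h_int h_const h_le) ?_
  rwa [setIntegral_const, Real.volume_real_Ioc_of_le hpq, smul_eq_mul, mul_comm,
    ← intervalIntegral.integral_of_le hpq]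

theorem IsCumulativeVariation.ae_abs_deriv_eq_one {V φ : ℝ → ℝ}
    (hV : IsCumulativeVariation (φ ∘ V) V) (hφ : LipschitzWith 1 φ) :
    ∀ᵐ s, s ∈ range V → |deriv φ s| = 1 := by
  have h_Ioc : ∀ n : ℕ, ∀ᵐ s, s ∈ Ioc (V (-n)) (V n) → |deriv φ s| = 1 := fun n => by
    have hn : -(n : ℝ) ≤ n := neg_le_self n.cast_nonneg
    simpa only [NNReal.coe_one] using ae_abs_deriv_eq_of_le_eVariationOn hφ (hV.monotone hn) (by
      rw [NNReal.coe_one, one_mul, ← hV.eVariationOn_Icc _ _ hn]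
      exact eVariationOn.comp_le_of_monotoneOn φ V (hV.monotone.monotoneOn _) fun x hx =>
        ⟨hV.monotone hx.1, hV.monotone hx.2⟩)
  have h_ne : ∀ᵐ s, ∀ n : ℕ, s ≠ V (-n) := ae_all_iff.2 fun n => by
    simp [ae_iff]
  filter_upwards [ae_all_iff.2 h_Ioc, h_ne] with s hs hs_ne
  rintro ⟨x, rfl⟩
  obtain ⟨n, hn⟩ := exists_nat_ge |x|
  exact hs n ⟨(hV.monotone (neg_le_of_abs_le hn)).lt_of_ne' (hs_ne n),
    hV.monotone (le_of_abs_le hn)⟩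

theorem eventually_abs_add_le_of_hasDerivAt {φ : ℝ → ℝ} {φ' s₀ c : ℝ} (hφ : HasDerivAt φ φ' s₀)
    (hc : c < |φ'|) : (∀ᶠ s in 𝓝[≥] s₀, |φ s₀| + c * (s - s₀) ≤ |φ s|) ∨
      ∀ᶠ s in 𝓝[≤] s₀, |φ s₀| + c * (s₀ - s) ≤ |φ s| := by
  wlog hφ₀ : 0 ≤ φ s₀ generalizing φ φ'
  · simpa only [Pi.neg_apply, abs_neg] using this hφ.neg (by rwa [abs_neg]) (by
      rw [Pi.neg_apply]; linarith)
  have h_near := (hasDerivAt_iff_isLittleO.1 hφ).def (sub_pos.2 hc)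
  simp only [smul_eq_mul, Real.norm_eq_abs] at h_near
  rcases le_total 0 φ' with hφ' | hφ'
  · left
    filter_upwards [nhdsWithin_le_nhds h_near, self_mem_nhdsWithin] with s hs (hs₀ : s₀ ≤ s)
    rw [abs_of_nonneg hφ', abs_of_nonneg (sub_nonneg.2 hs₀)] at hs
    rw [abs_of_nonneg hφ₀]
    linarith [(abs_le.1 hs).1, le_abs_self (φ s)]
  · right
    filter_upwards [nhdsWithin_le_nhds h_near, self_mem_nhdsWithin] with s hs (hs₀ : s ≤ s₀)
    rw [abs_of_nonpos hφ', abs_of_nonpos (sub_nonpos.2 hs₀)] at hs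
    rw [abs_of_nonneg hφ₀]
    linarith [(abs_le.1 hs).1, le_abs_self (φ s)]

namespace FiniteMax

variable {f V : ℝ → ℝ} {x c : ℝ}

theorem le_abs_of_uMax_le (hf : FiniteMax f) {m b K : ℝ} (hxm : x ≤ m) (hmb : m < b)
    (hx : uMax f x ≤ |f x|) (h_ge : ∀ t ∈ Ioo x m, |f x| ≤ |f t|)
    (hK : ∀ t ∈ Ioo m b, K ≤ |f t|) : K ≤ |f x| := by
  refine le_of_mul_le_mul_right ?_ (sub_pos.2 hmb)
  have h_upper : ∫ t in x..b, |f t| ≤ |f x| * (b - x) :=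
    (hf.integral_le_uMax le_rfl (hxm.trans hmb.le)).trans
      (mul_le_mul_of_nonneg_right hx (sub_nonneg.2 (hxm.trans hmb.le)))
  linarith [hf.integral_abs_add x m b, hf.le_integral_abs hxm h_ge,
    hf.le_integral_abs hmb.le hK]

-- If `|f|` grows with `V` to the right of `x`, its averages there exceed `|f x|` unless `V` stalls.
theorem exists_gt_eq_of_eventually_add_le (hf : FiniteMax f) (hV : Monotone V)
    (hx : uMax f x ≤ |f x|) (hc : 0 < c)
    (h_growth : ∀ᶠ t in 𝓝[≥] x, |f x| + c * (V t - V x) ≤ |f t|) : ∃ m > x, V m = V x := by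
  obtain ⟨b, hxb, hb⟩ := mem_nhdsGE_iff_exists_Icc_subset.1 h_growth
  obtain ⟨m, hxm, hmb⟩ := exists_between hxb
  have h_ge : ∀ t ∈ Ioo x b, |f x| + c * (V t - V x) ≤ |f t| := fun t ht =>
    hb (Ioo_subset_Icc_self ht)
  have h_m : |f x| + c * (V m - V x) ≤ |f x| := by
    refine hf.le_abs_of_uMax_le hxm.le hmb hx (fun t ht => ?_) fun t ht => ?_
    · exact (le_add_of_nonneg_right (mul_nonneg hc.le (sub_nonneg.2 (hV ht.1.le)))).trans
        (h_ge t ⟨ht.1, ht.2.trans hmb⟩)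
    · refine le_trans ?_ (h_ge t ⟨hxm.trans ht.1, ht.2⟩)
      gcongr
      exact hV ht.1.le
  refine ⟨m, hxm, le_antisymm ?_ (hV hxm.le)⟩
  exact sub_nonpos.1 (nonpos_of_mul_nonpos_right (by simpa using h_m) hc)

theorem exists_lt_eq_of_eventually_add_le (hf : FiniteMax f) (hV : Monotone V)
    (hx : uMax f x ≤ |f x|) (hc : 0 < c)
    (h_growth : ∀ᶠ t in 𝓝[≤] x, |f x| + c * (V x - V t) ≤ |f t|) : ∃ m < x, V m = V x := by
  obtain ⟨m, hxm, hm⟩ := hf.comp_neg.exists_gt_eq_of_eventually_add_le (V := fun t => -V (-t))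
    (x := -x) (fun _ _ hst => neg_le_neg (hV (neg_le_neg hst)))
    (by rwa [uMax_comp_neg, neg_neg]) hc (by
      filter_upwards [tendsto_neg_nhdsGE_neg.eventually h_growth] with t ht
      rwa [neg_neg, neg_sub_neg])
  exact ⟨-m, neg_lt.1 hxm, by simpa using hm⟩

end FiniteMax

theorem uMax_le_abs_of_mem_contactSet {f : ℝ → ℝ} {x : ℝ} (hx : x ∈ contactSet f)
    (hf : ContinuousAt f x) : uMax f x ≤ |f x| := by
  refine le_of_forall_pos_le_add fun ε hε => ?_
  obtain ⟨δ, hδ, h_near⟩ := Metric.continuousAt_iff.1 hf.abs (ε / 2) (half_pos hε)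
  obtain ⟨t, ht, hft⟩ := hx (min δ (ε / 2)) (lt_min hδ (half_pos hε))
  have h_t := (abs_lt.1 (h_near (ht.trans_le (min_le_left _ _)))).2
  linarith [min_le_right δ (ε / 2)]

theorem FiniteMax.exists_ne_eq_of_mem_contactSet {V φ : ℝ → ℝ} (hf : FiniteMax (φ ∘ V))
    (hV : Monotone V) {x φ' : ℝ} (hx : x ∈ contactSet (φ ∘ V)) (hVx : ContinuousAt V x)
    (hφ : HasDerivAt φ φ' (V x)) (hφ' : φ' ≠ 0) : ∃ y ≠ x, V y = V x := by
  have h_le := uMax_le_abs_of_mem_contactSet hx (hφ.continuousAt.comp hVx)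
  have hc : 0 < |φ'| / 2 := half_pos (abs_pos.2 hφ')
  rcases eventually_abs_add_le_of_hasDerivAt hφ (half_lt_self (abs_pos.2 hφ')) with
    h_growth | h_growth
  · have hV_tendsto : Tendsto V (𝓝[≥] x) (𝓝[≥] V x) :=
      hVx.continuousWithinAt.tendsto_nhdsWithin fun y hy => hV hy
    obtain ⟨y, hy, hVy⟩ := hf.exists_gt_eq_of_eventually_add_le hV h_le hc
      (hV_tendsto.eventually h_growth)
    exact ⟨y, hy.ne', hVy⟩
  · have hV_tendsto : Tendsto V (𝓝[≤] x) (𝓝[≤] V x) :=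
      hVx.continuousWithinAt.tendsto_nhdsWithin fun y hy => hV hy
    obtain ⟨y, hy, hVy⟩ := hf.exists_lt_eq_of_eventually_add_le hV h_le hc
      (hV_tendsto.eventually h_growth)
    exact ⟨y, hy.ne, hVy⟩

theorem volume_image_contactSet {f V : ℝ → ℝ} (hf : FiniteMax f)
    (hV : IsCumulativeVariation f V) :
    volume (V '' (contactSet f ∩ {x | ContinuousAt V x})) = 0 := by
  obtain ⟨φ, hφ, rfl⟩ := hV.exists_lipschitzWith_comp
  have h_values : ∀ᵐ s, ¬ ∃ y z, y < z ∧ V y = s ∧ V z = s :=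
    hV.monotone.countable_setOfPred_two_preimages.ae_notMem volume
  refine measure_mono_null ?_ <| ae_iff.1 <|
    (hV.ae_abs_deriv_eq_one hφ).and (hφ.ae_differentiableAt_real.and h_values)
  rintro _ ⟨x, ⟨hx, hVx⟩, rfl⟩ ⟨h_deriv, hφ_diff, h_value⟩
  have hφ' : deriv φ (V x) ≠ 0 :=
    abs_ne_zero.1 (by rw [h_deriv (mem_range_self x)]; exact one_ne_zero)
  obtain ⟨y, hyx, hVy⟩ :=
    hf.exists_ne_eq_of_mem_contactSet hV.monotone hx hVx hφ_diff.hasDerivAt hφ'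
  rcases hyx.lt_or_gt with h | h
  exacts [h_value ⟨y, x, h, hVy, rfl⟩, h_value ⟨x, y, h, rfl, hVy⟩]

/-! ### Assembling the local estimates -/

section Grid

variable {E : Type*} [PseudoEMetricSpace E]

theorem sum_ofReal_sub_le_volume {v : ℕ → ℝ} (hv : Monotone v) {O : Set ℝ} {S : Finset ℕ}
    (hO : ∀ k ∈ S, Icc (v k) (v (k + 1)) ⊆ O) :
    ∑ k ∈ S, ENNReal.ofReal (v (k + 1) - v k) ≤ volume O := by
  have h_disj : (S : Set ℕ).PairwiseDisjoint fun k => Ioc (v k) (v (k + 1)) := fun i _ j _ hij =>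
    hv.pairwise_disjoint_on_Ioc_succ hij
  calc ∑ k ∈ S, ENNReal.ofReal (v (k + 1) - v k)
      = ∑ k ∈ S, volume (Ioc (v k) (v (k + 1))) := by simp only [Real.volume_Ioc]
    _ = volume (⋃ k ∈ S, Ioc (v k) (v (k + 1))) :=
        (measure_biUnion_finset h_disj fun _ _ => measurableSet_Ioc).symm
    _ ≤ volume O := measure_mono (iUnion₂_subset fun k hk => Ioc_subset_Icc_self.trans (hO k hk))

theorem sum_indicator_ofReal_le {β : Type*} {s : Set β} {w : β → ℝ} (hw : ∀ i, 0 ≤ w i) {ε : ℝ}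
    (hε : ∀ I : Finset β, ↑I ⊆ s → ∑ i ∈ I, w i ≤ ε) (I : Finset β) :
    ∑ i ∈ I, s.indicator (ENNReal.ofReal ∘ w) i ≤ ENNReal.ofReal ε := by
  classical
  rw [Finset.sum_indicator_eq_sum_filter]
  simp only [Function.comp_apply]
  rw [← ENNReal.ofReal_sum_of_nonneg fun i _ => hw i]
  exact ENNReal.ofReal_le_ofReal (hε _ fun i hi => (Finset.mem_filter.1 hi).2)

theorem eVariationOn_Icc_le_sum_image_add_sum {α β : Type*} [LinearOrder α] [DecidableEq β]
    (u : α → E) {t : ℕ → α} (ht : Monotone t) (n : ℕ) {U : β → Set α} (ι : ℕ → β) (p : β → Prop)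
    [DecidablePred p] (hU : ∀ k < n, p (ι k) → Icc (t k) (t (k + 1)) ⊆ U (ι k)) :
    eVariationOn u (Icc (t 0) (t n)) ≤
      ∑ i ∈ {k ∈ Finset.range n | p (ι k)}.image ι, eVariationOn u (U i) +
        ∑ k ∈ Finset.range n with ¬ p (ι k), eVariationOn u (Icc (t k) (t (k + 1))) := by
  rw [← eVariationOn.sum' u ht,
    ← Finset.sum_filter_add_sum_filter_not (Finset.range n) fun k => p (ι k)]
  gcongr
  rw [← Finset.sum_fiberwise_of_maps_to fun k hk => Finset.mem_image_of_mem ι hk]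
  refine Finset.sum_le_sum fun i _ => sum_eVariationOn_Icc_le ht _ (U i) fun k hk => ?_
  obtain ⟨hkp, rfl⟩ := Finset.mem_filter.1 hk
  exact hU k (Finset.mem_range.1 (Finset.mem_filter.1 hkp).1) (Finset.mem_filter.1 hkp).2

theorem IsCumulativeVariation.sum_eVariationOn_Icc_add_three_le {α : Type*} [LinearOrder α]
    {f : α → E} {V : α → ℝ} (hV : IsCumulativeVariation f V) {t : ℕ → α} (ht : Monotone t)
    {O : Set ℝ} {S : Finset ℕ} (hO : ∀ k ∈ S, Icc (V (t k)) (V (t (k + 3))) ⊆ O) :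
    ∑ k ∈ S, eVariationOn f (Icc (t k) (t (k + 3))) ≤ 3 * volume O := by
  have h_split : ∀ k, eVariationOn f (Icc (t k) (t (k + 3))) =
      ∑ i ∈ Finset.range 3, ENNReal.ofReal (V (t (k + 1 + i)) - V (t (k + i))) := fun k => by
    have h_sum := eVariationOn.sum' f (I := fun i => t (k + i)) (n := 3)
      fun i j hij => ht (by gcongr)
    rw [add_zero] at h_sum
    rw [← h_sum]
    exact Finset.sum_congr rfl fun i _ => by
      rw [hV.eVariationOn_Icc _ _ (ht (by lia)), add_right_comm, add_assoc]
  have h_shift : ∀ i ∈ Finset.range 3,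
      ∑ k ∈ S, ENNReal.ofReal (V (t (k + 1 + i)) - V (t (k + i))) ≤ volume O := fun i hi => by
    rw [Finset.mem_range] at hi
    exact sum_ofReal_sub_le_volume (v := fun k => V (t (k + i)))
      (fun k l hkl => hV.monotone (ht (by gcongr))) fun k hk =>
        (Icc_subset_Icc (hV.monotone (ht (by lia))) (hV.monotone (ht (by lia)))).trans (hO k hk)
  simp only [h_split]
  rw [Finset.sum_comm]
  simpa using Finset.sum_le_sum h_shift

theorem exists_strictMono_Icc_subset_of_isOpen_cover {β : Type*} {U : β → Set ℝ} {a b : ℝ}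
    (hab : a < b) (hU : ∀ i, IsOpen (U i)) (h_cover : Icc a b ⊆ ⋃ i, U i) :
    ∃ (t : ℕ → ℝ) (n : ℕ), StrictMono t ∧ t 1 = a ∧ t (n + 1) = b ∧
      ∀ k < n, ∃ i, Icc (t k) (t (k + 3)) ⊆ U i := by
  obtain ⟨δ, hδ, h_ball⟩ := lebesgue_number_lemma_of_metric isCompact_Icc hU h_cover
  obtain ⟨n, hn⟩ := exists_nat_gt (2 * (b - a) / δ)
  have hba : 0 < b - a := sub_pos.2 hab
  have hn₀ : (0 : ℝ) < n := lt_of_le_of_lt (by positivity) hn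
  set d := (b - a) / n with hd
  have hd₀ : 0 < d := div_pos hba hn₀
  have hnd : n * d = b - a := mul_div_cancel₀ _ hn₀.ne'
  have hdδ : 2 * d < δ := by rwa [hd, mul_div_assoc', div_lt_comm₀ hn₀ hδ]
  refine ⟨fun k => a + (k - 1) * d, n, fun k l hkl => ?_, by simp, by simp [hnd], fun k hk => ?_⟩
  · dsimp only
    gcongr
  · have hkn : (k : ℝ) * d ≤ n * d := by gcongr
    obtain ⟨i, hi⟩ := h_ball (a + k * d) ⟨le_add_of_nonneg_right (by positivity), by linarith⟩
    refine ⟨i, Subset.trans (fun x hx => ?_) hi⟩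
    obtain ⟨h_left, h_right⟩ := hx
    push_cast at h_left h_right
    rw [Metric.mem_ball, Real.dist_eq, abs_lt]
    constructor <;> linarith

end Grid

namespace BVApprox

variable {f V : ℝ → ℝ} {F : ℕ → ℝ → ℝ} {e : ℕ → ℝ}

theorem exists_local_cover (H : BVApprox f F e) {O : Set ℝ} (hO : IsOpen O)
    (h_image : V '' (contactSet f ∩ {x | ContinuousAt V x}) ⊆ O) {w : ℝ → ℝ} (hw : ∀ x, 0 < w x)
    (x : ℝ) : ∃ U, IsOpen U ∧ x ∈ U ∧ (AsympVarLE (maxDiff f F) U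
        ({x | ¬ ContinuousAt V x}.indicator (ENNReal.ofReal ∘ w) x) ∨
      ∀ y ∈ U, ∀ z ∈ U, Icc (V y) (V z) ⊆ O) := by
  by_cases hVx : ContinuousAt V x
  · by_cases hx : x ∈ contactSet f
    · obtain ⟨δ, hδ, h_ball⟩ := Metric.isOpen_iff.1 hO (V x) (h_image ⟨x, ⟨hx, hVx⟩, rfl⟩)
      obtain ⟨U, hU_sub, hU, hxU⟩ := mem_nhds_iff.1 (hVx (Metric.ball_mem_nhds _ hδ))
      refine ⟨U, hU, hxU, Or.inr fun y hy z hz => Subset.trans ?_ h_ball⟩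
      rw [Real.ball_eq_Ioo] at hU_sub ⊢
      exact ordConnected_Ioo.out (hU_sub hy) (hU_sub hz)
    · obtain ⟨ρ, hρ, h_zero⟩ := H.exists_asympVarLE_zero_nhds hx
      exact ⟨Ioo (x - ρ) (x + ρ), isOpen_Ioo, ⟨by linarith, by linarith⟩,
        Or.inl (h_zero.mono Ioo_subset_Icc_self zero_le)⟩
  · obtain ⟨ρ, hρ, h_small⟩ := H.exists_asympVarLE_nhds x (hw x)
    refine ⟨Ioo (x - ρ) (x + ρ), isOpen_Ioo, ⟨by linarith, by linarith⟩,
      Or.inl (h_small.mono Ioo_subset_Icc_self ?_)⟩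
    rw [indicator_of_mem (show x ∈ {x | ¬ ContinuousAt V x} from hVx), Function.comp_apply]

theorem asympVarLE_Icc_of_cover (H : BVApprox f F e) (hV : IsCumulativeVariation f V) {β : Type*}
    {U : β → Set ℝ} {W : β → ℝ≥0∞} {C : ℝ≥0∞} {O : Set ℝ} {a b : ℝ} (hab : a < b)
    (hU : ∀ i, IsOpen (U i)) (h_cover : Icc a b ⊆ ⋃ i, U i)
    (h_local : ∀ i, AsympVarLE (maxDiff f F) (U i) (W i) ∨
      ∀ y ∈ U i, ∀ z ∈ U i, Icc (V y) (V z) ⊆ O) (hW : ∀ I : Finset β, ∑ i ∈ I, W i ≤ C) :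
    AsympVarLE (maxDiff f F) (Icc a b) (C + 8 * (3 * volume O)) := by
  classical
  obtain ⟨t, n, ht, rfl, rfl, h_cell⟩ :=
    exists_strictMono_Icc_subset_of_isOpen_cover hab hU h_cover
  have : Nonempty β := (mem_iUnion.1 (h_cover (left_mem_Icc.2 hab.le))).nonempty
  choose! ι hι using h_cell
  let p : β → Prop := fun i => AsympVarLE (maxDiff f F) (U i) (W i)
  let A : Finset β := {k ∈ Finset.range n | p (ι k)}.image ι
  let B : Finset ℕ := {k ∈ Finset.range n | ¬ p (ι k)}
  have hB : ∀ k ∈ B, Icc (V (t k)) (V (t (k + 3))) ⊆ O := fun k hk => by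
    obtain ⟨hkn, hkp⟩ := Finset.mem_filter.1 hk
    have hk_le : t k ≤ t (k + 3) := ht.monotone (Nat.le_add_right k 3)
    have hk_sub := hι k (Finset.mem_range.1 hkn)
    exact (h_local (ι k)).resolve_left hkp _ (hk_sub (left_mem_Icc.2 hk_le)) _
      (hk_sub (right_mem_Icc.2 hk_le))
  refine (AsympVarLE.of_le_sum (I := A.disjSum B)
    (S := Sum.elim U fun k => Icc (t (k + 1)) (t (k + 1 + 1)))
    (C := Sum.elim W fun k => 8 * eVariationOn f (Icc (t k) (t (k + 3))))
    (fun i hi => ?_) fun j => ?_).mono subset_rfl ?_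
  · rcases i with i | k
    · obtain ⟨k, hk, rfl⟩ := Finset.mem_image.1 (Finset.inl_mem_disjSum.1 hi)
      exact (Finset.mem_filter.1 hk).2
    · exact H.asympVarLE_Icc (ht (Nat.lt_succ_self k)) (ht (Nat.lt_succ_self (k + 2)))
  · rw [Finset.sum_disjSum]
    exact eVariationOn_Icc_le_sum_image_add_sum _ (t := fun k => t (k + 1))
      (fun k l hkl => ht.monotone (by gcongr)) n ι p fun k hk _ => (Icc_subset_Icc
        (ht.monotone (Nat.le_succ k)) (ht.monotone (Nat.le_succ (k + 2)))).trans (hι k hk)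
  · rw [Finset.sum_disjSum]
    simp only [Sum.elim_inl, Sum.elim_inr]
    rw [← Finset.mul_sum]
    gcongr
    exacts [hW A, hV.sum_eVariationOn_Icc_add_three_le ht.monotone hB]

theorem asympVarLE_Icc_zero_of_lt (H : BVApprox f F e) {a b : ℝ} (hab : a < b) :
    AsympVarLE (maxDiff f F) (Icc a b) 0 := by
  refine .of_forall_pos fun ε hε => ?_
  have hε' : 0 < ε / 25 := by positivity
  obtain ⟨V, hV⟩ := exists_isCumulativeVariation H.bv.locallyBoundedVariationOn
  obtain ⟨w, hw, hw_sum⟩ := hV.monotone.countable_not_continuousAt.exists_pos_forall_sum_le hε'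
  obtain ⟨O, h_image, hO, hO_vol⟩ :=
    (V '' (contactSet f ∩ {x | ContinuousAt V x})).exists_isOpen_le_add
      volume (ENNReal.ofReal_pos.2 hε').ne'
  rw [volume_image_contactSet H.bv.finiteMax hV, zero_add] at hO_vol
  choose U hU hxU h_local using H.exists_local_cover hO h_image hw
  refine (H.asympVarLE_Icc_of_cover hV hab hU (fun x _ => mem_iUnion.2 ⟨x, hxU x⟩) h_local
    (sum_indicator_ofReal_le (fun x => (hw x).le) hw_sum)).mono subset_rfl ?_
  calc ENNReal.ofReal (ε / 25) + 8 * (3 * volume O)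
      ≤ ENNReal.ofReal (ε / 25) + 8 * (3 * ENNReal.ofReal (ε / 25)) := by gcongr
    _ = 25 * ENNReal.ofReal (ε / 25) := by ring
    _ = 0 + ENNReal.ofReal ε := by
        rw [zero_add, ← ENNReal.ofReal_ofNat 25, ← ENNReal.ofReal_mul (by norm_num),
          mul_div_cancel₀ _ (by norm_num)]

theorem asympVarLE_univ_zero (H : BVApprox f F e) : AsympVarLE (maxDiff f F) univ 0 := by
  refine .of_forall_pos fun ε hε => ?_
  obtain ⟨R, hR, h_left, h_right⟩ := H.exists_asympVarLE_tails (half_pos hε)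
  have hRR : -R < R := neg_lt_self hR
  have h_Iic : AsympVarLE (maxDiff f F) (Iic R) (ENNReal.ofReal (ε / 2) + 0) :=
    h_left.of_le_add (H.asympVarLE_Icc_zero_of_lt hRR) fun j => by
      rw [← eVariationOn.union _ isGreatest_Iic (isLeast_Icc hRR.le),
        Iic_union_Icc_eq_Iic hRR.le]
  have h_univ : AsympVarLE (maxDiff f F) univ
      (ENNReal.ofReal (ε / 2) + 0 + ENNReal.ofReal (ε / 2)) :=
    h_Iic.of_le_add h_right fun j => by
      rw [← eVariationOn.union _ isGreatest_Iic isLeast_Ici, Iic_union_Ici]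
  refine h_univ.mono subset_rfl (le_of_eq ?_)
  rw [add_zero, zero_add, ← ENNReal.ofReal_add (half_pos hε).le (half_pos hε).le, add_halves]

end BVApprox

/-! ### Right-continuous representatives -/

namespace BVfun

variable {f g : ℝ → ℝ}

theorem sub (hf : BVfun f) (hg : BVfun g) : BVfun (f - g) :=
  ((eVariationOn_sub_le f g univ).trans_lt
    (ENNReal.add_lt_top.2 ⟨Ne.lt_top hf, Ne.lt_top hg⟩)).ne

theorem rightLim_ae_eq (hf : BVfun f) : f =ᵐ[volume] f.rightLim := by
  obtain ⟨V, hV⟩ := exists_isCumulativeVariation hf.locallyBoundedVariationOn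
  filter_upwards [hV.monotone.countable_not_continuousAt.ae_notMem volume] with x hVx
  exact (hV.continuousAt (not_not.1 hVx)).continuousWithinAt.rightLim_eq.symm

theorem abs_rightLim_le_uMax (hf : BVfun f) (x : ℝ) :
    |f.rightLim x| ≤ uMax f.rightLim x := by
  have hf_right : FiniteMax f.rightLim := BVfun.finiteMax (BoundedVariationOn.rightLim hf)
  refine le_of_forall_pos_le_add fun ε hε => sub_le_iff_le_add.1 ?_
  have h_tendsto : Tendsto (fun y => |f.rightLim y|) (𝓝[≥] x) (𝓝 |f.rightLim x|) :=
    (BoundedVariationOn.continuousWithinAt_rightLim hf).abs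
  obtain ⟨b, hxb, hb⟩ := mem_nhdsGE_iff_exists_Icc_subset.1
    (h_tendsto.eventually_const_le (sub_lt_self _ hε))
  exact le_of_mul_le_mul_right
    ((hf_right.le_integral_abs hxb.le fun t ht => hb (Ioo_subset_Icc_self ht)).trans
      (hf_right.integral_le_uMax le_rfl hxb.le)) (sub_pos.2 hxb)

theorem rightLim_sub (hf : BVfun f) (hg : BVfun g) :
    (f - g).rightLim = f.rightLim - g.rightLim :=
  funext fun x => rightLim_eq_of_tendsto
    ((BoundedVariationOn.tendsto_rightLim hf x).sub (BoundedVariationOn.tendsto_rightLim hg x))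

theorem abs_le_bvNorm (hf : BVfun f) (x : ℝ) : |f x| ≤ bvNorm f := by
  have h_tendsto := BoundedVariationOn.tendsto_atBot_limUnder hf
  have h_sub : |f x - limUnder atBot f| ≤ varOn f univ :=
    le_of_tendsto (tendsto_const_nhds.sub h_tendsto).abs <| .of_forall fun y => by
      simpa only [Real.dist_eq, varOn] using BoundedVariationOn.dist_le hf (mem_univ x) (mem_univ y)
  calc |f x| ≤ |limUnder atBot f| + |f x - limUnder atBot f| := by
        simpa only [add_sub_cancel] using abs_add_le (limUnder atBot f) (f x - limUnder atBot f)
    _ ≤ bvNorm f := by unfold bvNorm; gcongr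

theorem abs_rightLim_le_bvNorm (hf : BVfun f) (x : ℝ) : |f.rightLim x| ≤ bvNorm f :=
  le_of_tendsto (BoundedVariationOn.tendsto_rightLim hf x).abs (.of_forall hf.abs_le_bvNorm)

theorem eVariationOn_rightLim_le_bvNorm (hf : BVfun f) :
    eVariationOn f.rightLim univ ≤ ENNReal.ofReal (bvNorm f) := by
  refine (eVariationOn.eVariationOn_rightLim_le isOpen_univ).trans ?_
  rw [← ENNReal.ofReal_toReal (a := eVariationOn f univ) hf]
  exact ENNReal.ofReal_le_ofReal (le_add_of_nonneg_left (abs_nonneg _))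

end BVfun

theorem bvApprox_rightLim {f : ℝ → ℝ} (hf : BVfun f) {F : ℕ → ℝ → ℝ} (hF : ∀ j, BVfun (F j))
    (h_conv : Tendsto (fun j => bvNorm (F j - f)) atTop (𝓝 0)) :
    BVApprox f.rightLim (fun j => (F j).rightLim) fun j => bvNorm (F j - f) where
  bv := BoundedVariationOn.rightLim hf
  bv_seq j := BoundedVariationOn.rightLim (hF j)
  abs_le_uMax := hf.abs_rightLim_le_uMax
  abs_seq_le_uMax j := (hF j).abs_rightLim_le_uMax
  tendsto := h_conv
  abs_sub_le j x := by
    simpa only [(hF j).rightLim_sub hf, Pi.sub_apply] using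
      ((hF j).sub hf).abs_rightLim_le_bvNorm x
  eVariationOn_sub_le j := by
    simpa only [(hF j).rightLim_sub hf] using ((hF j).sub hf).eVariationOn_rightLim_le_bvNorm

theorem BVApprox.tendsto_bvNorm_maxDiff {f : ℝ → ℝ} {F : ℕ → ℝ → ℝ} {e : ℕ → ℝ}
    (H : BVApprox f F e) : Tendsto (fun j => bvNorm (maxDiff f F j)) atTop (𝓝 0) := by
  have h_bv : ∀ j, BVfun (maxDiff f F j) := fun j =>
    ((H.bv_seq j).uMax_of_abs_le (H.abs_seq_le_uMax j)).sub (H.bv.uMax_of_abs_le H.abs_le_uMax)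
  have h_nonneg : ∀ j, 0 ≤ bvNorm (maxDiff f F j) := fun j =>
    add_nonneg (abs_nonneg _) ENNReal.toReal_nonneg
  have h_lim : ∀ j, |limUnder atBot (maxDiff f F j)| ≤ e j := fun j =>
    le_of_tendsto (BoundedVariationOn.tendsto_atBot_limUnder (h_bv j)).abs
      (.of_forall (H.abs_maxDiff_le j))
  refine tendsto_order.2 ⟨fun c hc => .of_forall fun j => hc.trans_le (h_nonneg j), fun ε hε => ?_⟩
  filter_upwards [H.asympVarLE_univ_zero (ε / 2) (half_pos hε),
    H.tendsto.eventually_lt_const (half_pos hε)] with j h_var h_e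
  rw [zero_add] at h_var
  calc bvNorm (maxDiff f F j)
      ≤ e j + ε / 2 :=
        add_le_add (h_lim j) (ENNReal.toReal_le_of_le_ofReal (half_pos hε).le h_var)
    _ < ε := by linarith

theorem stmt18 (f : ℝ → ℝ) (hf : BVfun f) (fj : ℕ → ℝ → ℝ) (hfj : ∀ j, BVfun (fj j))
    (hconv : Tendsto (fun j => bvNorm (fj j - f)) atTop (𝓝 0)) :
    Tendsto (fun j => bvNorm (uMax (fj j) - uMax f)) atTop (𝓝 0) := by
  have h_right := (bvApprox_rightLim hf hfj hconv).tendsto_bvNorm_maxDiff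
  simpa only [maxDiff, ← uMax_congr_ae hf.rightLim_ae_eq,
    ← uMax_congr_ae (hfj _).rightLim_ae_eq] using h_right
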